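/- (Theorem 18) Let 0 < θ₀ < θ₁ < 1, 0 < q₁, r, r₁, r₀ ≤ ∞, a, a₁, b₀, b₁ ∈ SV, and ‖s^{-1/r₁} b₁(s)/a₁(s)‖_{r₁,(1,∞)} < ∞. Put c₁(t) = a₁(t) ‖s^{-1/r₁} b₁(s)/a₁(s)‖_{r₁,(t,∞)} and ρ(t) = t^{θ₁-θ₀} b₀(t)/c₁(t). (i) If 0 < θ < 1 then (Ā_{θ₀,r₀;b₀}, Ā^𝓛_{θ₁,r₁,b₁,q₁,a₁})_{θ,r;a} ≅ Ā_{η,r;a^#}, where η = (1-θ)θ₀ + θθ₁ and a^#(t) = b₀(t)^{1-θ} c₁(t)^θ a(ρ(t)). (ii) If additionally ‖s^{-1/r} a(s)‖_{r,(1,∞)} < ∞, then (Ā_{θ₀,r₀;b₀}, Ā^𝓛_{θ₁,r₁,b₁,q₁,a₁})_{0,r;a} ≅ Ā^𝓛_{θ₀,r,a^#,r₀,b₀}, where a^#(t) = b₀(t) a(ρ(t)). -/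

import Mathlib

open MeasureTheory Set ENNReal Filter

noncomputable section

/-- The `L_q` quasi-norm (with respect to Lebesgue measure) of an `ℝ≥0∞`-valued
function over a set of reals; for `q = ∞` it is the essential supremum. -/
def LqNorm (q : ℝ≥0∞) (s : Set ℝ) (g : ℝ → ℝ≥0∞) : ℝ≥0∞ :=
  if q = ∞ then essSup g (volume.restrict s)
  else (∫⁻ t in s, g t ^ q.toReal) ^ q⁻¹.toReal

/-- The weight `s ↦ s ^ (-1/r) * b s`, as an `ℝ≥0∞`-valued function
(`1/∞ = 0` by convention). -/
def svWgt (r : ℝ≥0∞) (b : ℝ → ℝ) : ℝ → ℝ≥0∞ :=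
  fun s => ENNReal.ofReal (s ^ (-(r⁻¹.toReal)) * b s)

/-- `f` and `g` are equivalent on `s`: each is bounded by a constant multiple
of the other there. -/
def EquivOn (s : Set ℝ) (f g : ℝ → ℝ) : Prop :=
  ∃ C : ℝ, 0 < C ∧ ∀ t ∈ s, C⁻¹ * g t ≤ f t ∧ f t ≤ C * g t

/-- A positive measurable function `b` on `(0,∞)` is slowly varying if for every
`ε > 0`, `t ^ ε * b t` is equivalent to a non-decreasing function and
`t ^ (-ε) * b t` is equivalent to a non-increasing function. -/
def SlowlyVarying (b : ℝ → ℝ) : Prop :=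
  AEMeasurable b (volume.restrict (Ioi 0)) ∧ (∀ t ∈ Ioi (0:ℝ), 0 < b t) ∧
    ∀ ε : ℝ, 0 < ε →
      (∃ g : ℝ → ℝ, MonotoneOn g (Ioi 0) ∧ EquivOn (Ioi 0) (fun t => t ^ ε * b t) g) ∧
      (∃ g : ℝ → ℝ, AntitoneOn g (Ioi 0) ∧ EquivOn (Ioi 0) (fun t => t ^ (-ε) * b t) g)

/-- A quasi-Banach space continuously embedded into the ambient (Hausdorff) space `E`,
recorded via its extended-real-valued quasi-norm; the space itself is the set of
vectors of finite quasi-norm. -/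
structure QuasiBanach (E : Type*) [AddCommGroup E] [Module ℝ E] where
  N : E → ℝ≥0∞
  zero : N 0 = 0
  definite : ∀ x, N x = 0 → x = 0
  smul : ∀ (c : ℝ) (x : E), N (c • x) = ENNReal.ofReal |c| * N x
  quasi : ∃ C : ℝ≥0∞, 1 ≤ C ∧ C ≠ ∞ ∧ ∀ x y, N (x + y) ≤ C * (N x + N y)
  complete : ∀ f : ℕ → E,
    (∀ ε : ℝ≥0∞, 0 < ε → ∃ M : ℕ, ∀ m ≥ M, ∀ n ≥ M, N (f m - f n) < ε) →
    (∀ n, N (f n) ≠ ∞) →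
    ∃ g : E, N g ≠ ∞ ∧ Tendsto (fun n => N (f n - g)) atTop (nhds 0)

variable {E : Type*} [AddCommGroup E] [Module ℝ E]

/-- The Peetre K-functional of the couple whose quasi-norms are `N₀`, `N₁`. -/
def Kf (N₀ N₁ : E → ℝ≥0∞) (t : ℝ) (f : E) : ℝ≥0∞ :=
  ⨅ g : E, N₀ g + ENNReal.ofReal t * N₁ (f - g)

/-- The quasi-norm of the real interpolation space `Ā_{θ,q;b}`. -/
def normK (N₀ N₁ : E → ℝ≥0∞) (θ : ℝ) (q : ℝ≥0∞) (b : ℝ → ℝ) (f : E) : ℝ≥0∞ :=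
  LqNorm q (Ioi 0) fun u =>
    ENNReal.ofReal (u ^ (-θ - q⁻¹.toReal) * b u) * Kf N₀ N₁ u f

/-- The quasi-norm of the limiting interpolation space `Ā^𝓛_{σ,r,b,q,a}`. -/
def normL (N₀ N₁ : E → ℝ≥0∞) (σ : ℝ) (r q : ℝ≥0∞) (b a : ℝ → ℝ) (f : E) : ℝ≥0∞ :=
  LqNorm r (Ioi 0) fun t =>
    ENNReal.ofReal (t ^ (-(r⁻¹.toReal)) * (b t / a t)) *
      LqNorm q (Ioo 0 t) fun u =>
        ENNReal.ofReal (u ^ (-σ - q⁻¹.toReal) * a u) * Kf N₀ N₁ u f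

/-- The quasi-norm of the limiting interpolation space `Ā^𝓡_{σ,r,b,q,a}`. -/
def normR (N₀ N₁ : E → ℝ≥0∞) (σ : ℝ) (r q : ℝ≥0∞) (b a : ℝ → ℝ) (f : E) : ℝ≥0∞ :=
  LqNorm r (Ioi 0) fun t =>
    ENNReal.ofReal (t ^ (-(r⁻¹.toReal)) * (b t / a t)) *
      LqNorm q (Ioi t) fun u =>
        ENNReal.ofReal (u ^ (-σ - q⁻¹.toReal) * a u) * Kf N₀ N₁ u f

/-- Two (extended-real-valued) quasi-norms define the same space with
equivalent quasi-norms. -/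
def EquivNorms (nX nY : E → ℝ≥0∞) : Prop :=
  ∃ C : ℝ≥0∞, 0 < C ∧ C ≠ ∞ ∧ ∀ f : E, C⁻¹ * nY f ≤ nX f ∧ nX f ≤ C * nY f

open scoped NNReal

/-! ### Discrete `ℓ_q` quasi-norms over `ℤ` -/

/-- The discrete `ℓ_q(ℤ)` quasi-norm. -/
def lq (q : ℝ≥0∞) (y : ℤ → ℝ≥0∞) : ℝ≥0∞ :=
  if q = ∞ then ⨆ k, y k else (∑' k, y k ^ q.toReal) ^ q⁻¹.toReal

lemma lq_mono (q : ℝ≥0∞) {y z : ℤ → ℝ≥0∞} (h : ∀ k, y k ≤ z k) : lq q y ≤ lq q z := by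
  unfold lq
  split_ifs
  · exact iSup_mono h
  · exact ENNReal.rpow_le_rpow (ENNReal.tsum_le_tsum fun k =>
      ENNReal.rpow_le_rpow (h k) ENNReal.toReal_nonneg) ENNReal.toReal_nonneg

lemma rpow_rpow_inv' {q : ℝ≥0∞} (hq : 0 < q) (hq' : q ≠ ∞) (x : ℝ≥0∞) :
    (x ^ q.toReal) ^ q⁻¹.toReal = x := by
  rw [← ENNReal.rpow_mul, ENNReal.toReal_inv, mul_inv_cancel₀, ENNReal.rpow_one]
  exact (ENNReal.toReal_pos hq.ne' hq').ne'

lemma rpow_inv_rpow' {q : ℝ≥0∞} (hq : 0 < q) (hq' : q ≠ ∞) (x : ℝ≥0∞) :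
    (x ^ q⁻¹.toReal) ^ q.toReal = x := by
  rw [← ENNReal.rpow_mul, ENNReal.toReal_inv, inv_mul_cancel₀, ENNReal.rpow_one]
  exact (ENNReal.toReal_pos hq.ne' hq').ne'

lemma lq_const_mul {q : ℝ≥0∞} (hq : 0 < q) (c : ℝ≥0∞) (y : ℤ → ℝ≥0∞) :
    lq q (fun k => c * y k) = c * lq q y := by
  unfold lq
  split_ifs with h
  · rw [ENNReal.mul_iSup]
  · simp_rw [ENNReal.mul_rpow_of_nonneg _ _ (ENNReal.toReal_nonneg (a := q))]
    rw [ENNReal.tsum_mul_left, ENNReal.mul_rpow_of_nonneg _ _ ENNReal.toReal_nonneg,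
      rpow_rpow_inv' hq h]

lemma le_lq {q : ℝ≥0∞} (hq : 0 < q) (y : ℤ → ℝ≥0∞) (k : ℤ) : y k ≤ lq q y := by
  unfold lq
  split_ifs with h
  · exact le_iSup y k
  · calc y k = (y k ^ q.toReal) ^ q⁻¹.toReal := (rpow_rpow_inv' hq h _).symm
      _ ≤ _ := ENNReal.rpow_le_rpow (ENNReal.le_tsum (f := fun k => y k ^ q.toReal) k)
        ENNReal.toReal_nonneg

lemma rpow_add_le' (x y : ℝ≥0∞) {p : ℝ} (hp : 0 ≤ p) :
    (x + y) ^ p ≤ 2 ^ p * (x ^ p + y ^ p) := by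
  rw [mul_add, ← ENNReal.mul_rpow_of_nonneg _ _ hp, ← ENNReal.mul_rpow_of_nonneg _ _ hp]
  rcases le_total x y with h | h
  · refine le_trans (ENNReal.rpow_le_rpow ?_ hp) le_add_self
    rw [two_mul]; gcongr
  · refine le_trans (ENNReal.rpow_le_rpow ?_ hp) le_self_add
    rw [two_mul]; gcongr

lemma lq_add {q : ℝ≥0∞} (hq : 0 < q) :
    ∃ C : ℝ≥0, ∀ y z : ℤ → ℝ≥0∞, lq q (fun k => y k + z k) ≤ C * (lq q y + lq q z) := by
  by_cases h : q = ∞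
  · refine ⟨1, fun y z => ?_⟩
    simp only [lq, h, if_true, ENNReal.coe_one, one_mul]
    exact iSup_le fun k => add_le_add (le_iSup y k) (le_iSup z k)
  · refine ⟨2 * 2 ^ q⁻¹.toReal, fun y z => ?_⟩
    simp only [lq, h, if_false]
    have h0 : (0:ℝ) ≤ q.toReal := ENNReal.toReal_nonneg
    have h1 : (0:ℝ) ≤ q⁻¹.toReal := ENNReal.toReal_nonneg
    calc (∑' k, (y k + z k) ^ q.toReal) ^ q⁻¹.toReal
        ≤ (∑' k, 2 ^ q.toReal * (y k ^ q.toReal + z k ^ q.toReal)) ^ q⁻¹.toReal :=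
          ENNReal.rpow_le_rpow (ENNReal.tsum_le_tsum fun k => rpow_add_le' _ _ h0) h1
      _ = 2 * ((∑' k, y k ^ q.toReal) + ∑' k, z k ^ q.toReal) ^ q⁻¹.toReal := by
          rw [ENNReal.tsum_mul_left, ENNReal.mul_rpow_of_nonneg _ _ h1, rpow_rpow_inv' hq h,
            ENNReal.tsum_add]
      _ ≤ 2 * (2 ^ q⁻¹.toReal * ((∑' k, y k ^ q.toReal) ^ q⁻¹.toReal
            + (∑' k, z k ^ q.toReal) ^ q⁻¹.toReal)) := by
          gcongr; exact rpow_add_le' _ _ h1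
      _ = _ := by
          rw [← mul_assoc]; congr 1
          rw [ENNReal.coe_mul, ENNReal.coe_rpow_of_nonneg _ h1]; simp

lemma lq_shift (q : ℝ≥0∞) (y : ℤ → ℝ≥0∞) (m : ℤ) : lq q (fun k => y (k + m)) = lq q y := by
  unfold lq
  split_ifs with h
  · exact (Equiv.addRight m).iSup_comp (g := y)
  · congr 1
    exact (Equiv.addRight m).tsum_eq (fun k => y k ^ q.toReal)

lemma tsum_geo_int {δ : ℝ≥0∞} (hδ : δ < 1) : ∑' k : ℤ, δ ^ k.natAbs ≠ ∞ := by
  rw [tsum_of_nat_of_neg_add_one ENNReal.summable ENNReal.summable]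
  have h1 : (∑' n : ℕ, δ ^ (n : ℤ).natAbs) = (1 - δ)⁻¹ := by
    simp [ENNReal.tsum_geometric]
  have h2 : (∑' n : ℕ, δ ^ (-((n : ℤ) + 1)).natAbs) ≤ (1 - δ)⁻¹ := by
    rw [← ENNReal.tsum_geometric δ]
    refine ENNReal.tsum_le_tsum fun n => pow_le_pow_right_of_le_one' hδ.le ?_
    omega
  have h3 : (1 - δ)⁻¹ ≠ ∞ := ENNReal.inv_ne_top.2 (tsub_pos_of_lt hδ).ne'
  rw [h1]
  exact ENNReal.add_ne_top.2 ⟨h3, (h2.trans_lt h3.lt_top).ne⟩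

lemma pow_rpow_comm' (γ : ℝ≥0∞) (n : ℕ) (p : ℝ) : (γ ^ n) ^ p = (γ ^ p) ^ n := by
  rw [← ENNReal.rpow_natCast, ← ENNReal.rpow_mul, mul_comm, ENNReal.rpow_mul,
    ENNReal.rpow_natCast]

lemma lq_geo {q : ℝ≥0∞} (hq : 0 < q) {γ : ℝ≥0∞} (hγ : γ < 1) :
    ∃ C : ℝ≥0, ∀ k : ℤ, lq q (fun j => γ ^ (j - k).natAbs) ≤ C := by
  have key : lq q (fun j => γ ^ j.natAbs) ≠ ∞ := by
    unfold lq
    split_ifs with h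
    · exact ((iSup_le fun k => pow_le_one' hγ.le _).trans_lt ENNReal.one_lt_top).ne
    · refine ENNReal.rpow_ne_top_of_nonneg ENNReal.toReal_nonneg ?_
      simp_rw [pow_rpow_comm']
      exact tsum_geo_int (ENNReal.rpow_lt_one hγ (ENNReal.toReal_pos hq.ne' h))
  refine ⟨(lq q (fun j => γ ^ j.natAbs)).toNNReal, fun k => ?_⟩
  rw [ENNReal.coe_toNNReal key]
  exact (lq_shift q (fun j => γ ^ j.natAbs) (-k)).le

/-- Hardy-type inequality. -/
lemma lq_hardy_sup {q : ℝ≥0∞} (hq : 0 < q) {γ : ℝ≥0∞} (hγ : γ < 1) :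
    ∃ C : ℝ≥0, ∀ y : ℤ → ℝ≥0∞,
      lq q (fun k => ⨆ j, γ ^ (k - j).natAbs * y j) ≤ C * lq q y := by
  by_cases h : q = ∞
  · refine ⟨1, fun y => ?_⟩
    simp only [lq, h, if_true, ENNReal.coe_one, one_mul]
    refine iSup_le fun k => iSup_le fun j => ?_
    calc _ ≤ 1 * y j := by gcongr; exact pow_le_one' hγ.le _
      _ ≤ _ := by rw [one_mul]; exact le_iSup y j
  · have h0 : (0:ℝ) < q.toReal := ENNReal.toReal_pos hq.ne' h
    have h1 : (0:ℝ) ≤ q⁻¹.toReal := ENNReal.toReal_nonneg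
    have hS := tsum_geo_int (ENNReal.rpow_lt_one hγ h0)
    set S := ∑' k : ℤ, (γ ^ q.toReal) ^ k.natAbs with hSdef
    have hS' : S ^ q⁻¹.toReal ≠ ∞ := ENNReal.rpow_ne_top_of_nonneg h1 hS
    refine ⟨(S ^ q⁻¹.toReal).toNNReal, fun y => ?_⟩
    rw [ENNReal.coe_toNNReal hS']
    simp only [lq, h, if_false]
    rw [← ENNReal.mul_rpow_of_nonneg _ _ h1]
    refine ENNReal.rpow_le_rpow ?_ h1
    calc ∑' k, (⨆ j, γ ^ (k - j).natAbs * y j) ^ q.toReal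
        ≤ ∑' k, ∑' j, (γ ^ q.toReal) ^ (k - j).natAbs * y j ^ q.toReal := by
          refine ENNReal.tsum_le_tsum fun k => ?_
          have : (⨆ j, γ ^ (k - j).natAbs * y j) ≤
              (∑' j, (γ ^ q.toReal) ^ (k - j).natAbs * y j ^ q.toReal) ^ q⁻¹.toReal := by
            refine iSup_le fun j => ?_
            rw [← rpow_rpow_inv' hq h (γ ^ (k - j).natAbs * y j)]
            refine ENNReal.rpow_le_rpow ?_ h1
            rw [ENNReal.mul_rpow_of_nonneg _ _ h0.le, pow_rpow_comm']
            exact ENNReal.le_tsum (f := fun j => (γ ^ q.toReal) ^ (k - j).natAbs * y j ^ q.toReal) j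
          refine (ENNReal.rpow_le_rpow this h0.le).trans ?_
          rw [rpow_inv_rpow' hq h]
      _ = ∑' j, ∑' k, (γ ^ q.toReal) ^ (k - j).natAbs * y j ^ q.toReal := ENNReal.tsum_comm
      _ = ∑' j, S * y j ^ q.toReal := by
          refine tsum_congr fun j => ?_
          rw [ENNReal.tsum_mul_right]
          congr 1
          exact (Equiv.addRight (-j)).tsum_eq (fun k : ℤ => (γ ^ q.toReal) ^ k.natAbs)
      _ = _ := by rw [ENNReal.tsum_mul_left]

/-- Any `ℓ_p` norm is controlled by the weighted supremum norm. -/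
lemma lq_le_sup {p : ℝ≥0∞} (hp : 0 < p) {γ : ℝ≥0∞} (hγ : γ < 1) :
    ∃ C : ℝ≥0, ∀ (k : ℤ) (y : ℤ → ℝ≥0∞) (Z : ℝ≥0∞), (∀ j, y j ≤ γ ^ (j - k).natAbs * Z) →
      lq p y ≤ C * Z := by
  obtain ⟨C, hC⟩ := lq_geo hp hγ
  refine ⟨C, fun k y Z h => ?_⟩
  calc lq p y ≤ lq p (fun j => Z * γ ^ (j - k).natAbs) := lq_mono p fun j => by
        rw [mul_comm]; exact h j
    _ = Z * lq p (fun j => γ ^ (j - k).natAbs) := lq_const_mul hp _ _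
    _ ≤ Z * C := by gcongr; exact hC k
    _ = _ := mul_comm _ _

/-! ### Discretization of `L_q` quasi-norms -/

/-- A grid in `(0,∞)` of geometric type. -/
structure Grid (D : ℝ) (x : ℤ → ℝ) : Prop where
  pos : ∀ k, 0 < x k
  two : ∀ k, 2 * x k ≤ x (k + 1)
  le : ∀ k, x (k + 1) ≤ D * x k

lemma Grid.pow {D : ℝ} {x : ℤ → ℝ} (h : Grid D x) (k : ℤ) (n : ℕ) :
    2 ^ n * x k ≤ x (k + n) := by
  induction n with
  | zero => simp
  | succ n ih =>
    have := h.two (k + n)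
    push_cast
    rw [← add_assoc, pow_succ]
    nlinarith

lemma Grid.mono {D : ℝ} {x : ℤ → ℝ} (h : Grid D x) : StrictMono x :=
  strictMono_int_of_lt_succ fun k => by
    have := h.two k
    have := h.pos k
    linarith

lemma Grid.cover {D : ℝ} {x : ℤ → ℝ} (h : Grid D x) {u : ℝ} (hu : 0 < u) :
    ∃ k, u ∈ Ico (x k) (x (k + 1)) := by
  have h1 : ∃ b : ℤ, ∀ z : ℤ, x z ≤ u → z ≤ b := by
    obtain ⟨n, hn⟩ := pow_unbounded_of_one_lt (u / x 0) (one_lt_two)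
    refine ⟨n, fun z hz => ?_⟩
    by_contra hlt
    push Not at hlt
    have h2 := h.mono hlt
    have h3 := h.pow 0 n
    rw [zero_add] at h3
    rw [div_lt_iff₀ (h.pos 0)] at hn
    linarith
  have h2 : ∃ z : ℤ, x z ≤ u := by
    obtain ⟨n, hn⟩ := pow_unbounded_of_one_lt (x 0 / u) (one_lt_two)
    refine ⟨-n, ?_⟩
    have h3 := h.pow (-n) n
    rw [neg_add_cancel] at h3
    rw [div_lt_iff₀ hu] at hn
    have : (0:ℝ) < 2 ^ n := by positivity
    nlinarith
  obtain ⟨k, hk, hk'⟩ := Int.exists_greatest_of_bdd h1 h2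
  refine ⟨k, hk, ?_⟩
  by_contra hlt
  push Not at hlt
  have := hk' _ hlt
  omega

lemma Grid.disj {D : ℝ} {x : ℤ → ℝ} (h : Grid D x) {j k : ℤ} {u : ℝ}
    (hj : u ∈ Ico (x j) (x (j + 1))) (hk : u ∈ Ico (x k) (x (k + 1))) : j = k := by
  have h1 : j < k + 1 := h.mono.lt_iff_lt.1 (hj.1.trans_lt hk.2)
  have h2 : k < j + 1 := h.mono.lt_iff_lt.1 (hk.1.trans_lt hj.2)
  omega

lemma wgt_rpow {q : ℝ≥0∞} (hq : 0 < q) (hq' : q ≠ ∞) {u : ℝ} (hu : 0 < u) :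
    ENNReal.ofReal (u ^ (-(q⁻¹.toReal))) ^ q.toReal = ENNReal.ofReal u⁻¹ := by
  rw [ENNReal.ofReal_rpow_of_pos (by positivity), ← Real.rpow_mul hu.le, ENNReal.toReal_inv,
    neg_mul, inv_mul_cancel₀ (ENNReal.toReal_pos hq.ne' hq').ne', Real.rpow_neg_one]

lemma LqNorm_le {q : ℝ≥0∞} (hq : 0 < q) (D : ℝ) :
    ∃ C : ℝ≥0, ∀ x, Grid D x → ∀ (S : Set ℝ), MeasurableSet S → S ⊆ Ioi 0 →
      ∀ (G : ℝ → ℝ≥0∞) (y : ℤ → ℝ≥0∞),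
      (∀ k, ∀ u ∈ Ico (x k) (x (k + 1)), u ∈ S →
        G u ≤ ENNReal.ofReal (u ^ (-(q⁻¹.toReal))) * y k) →
      LqNorm q S G ≤ C * lq q y := by
  by_cases h : q = ∞
  · refine ⟨1, fun x hx S hS hS0 G y hG => ?_⟩
    simp only [LqNorm, lq, h, if_true, ENNReal.coe_one, one_mul]
    refine essSup_le_of_ae_le _ ?_
    filter_upwards [ae_restrict_mem hS] with u hu
    obtain ⟨k, hk⟩ := hx.cover (hS0 hu)
    have := hG k u hk hu
    simp only [h, ENNReal.inv_top, ENNReal.toReal_zero, neg_zero, Real.rpow_zero,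
      ENNReal.ofReal_one, one_mul] at this
    exact this.trans (le_iSup y k)
  · have h0 : (0:ℝ) < q.toReal := ENNReal.toReal_pos hq.ne' h
    have h1 : (0:ℝ) ≤ q⁻¹.toReal := ENNReal.toReal_nonneg
    refine ⟨(D.toNNReal) ^ q⁻¹.toReal, fun x hx S hS hS0 G y hG => ?_⟩
    simp only [LqNorm, lq, h, if_false]
    rw [ENNReal.coe_rpow_of_nonneg _ h1, ← ENNReal.mul_rpow_of_nonneg _ _ h1]
    refine ENNReal.rpow_le_rpow ?_ h1
    have hsub : S ⊆ ⋃ k, (Ico (x k) (x (k + 1)) ∩ S) := by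
      intro u hu
      obtain ⟨k, hk⟩ := hx.cover (hS0 hu)
      exact mem_iUnion.2 ⟨k, hk, hu⟩
    calc ∫⁻ t in S, G t ^ q.toReal
        ≤ ∫⁻ t in ⋃ k, (Ico (x k) (x (k + 1)) ∩ S), G t ^ q.toReal := lintegral_mono_set hsub
      _ ≤ ∑' k, ∫⁻ t in Ico (x k) (x (k + 1)) ∩ S, G t ^ q.toReal := lintegral_iUnion_le _ _
      _ ≤ ∑' k, (D.toNNReal : ℝ≥0∞) * y k ^ q.toReal := by
          refine ENNReal.tsum_le_tsum fun k => ?_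
          have hxk := hx.pos k
          calc ∫⁻ t in Ico (x k) (x (k + 1)) ∩ S, G t ^ q.toReal
              ≤ ∫⁻ t in Ico (x k) (x (k + 1)) ∩ S, ENNReal.ofReal (x k)⁻¹ * y k ^ q.toReal := by
                refine setLIntegral_mono' (measurableSet_Ico.inter hS) fun u hu => ?_
                have hu0 : 0 < u := hxk.trans_le hu.1.1
                calc G u ^ q.toReal ≤ (ENNReal.ofReal (u ^ (-(q⁻¹.toReal))) * y k) ^ q.toReal :=
                      ENNReal.rpow_le_rpow (hG k u hu.1 hu.2) h0.le
                  _ = ENNReal.ofReal u⁻¹ * y k ^ q.toReal := by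
                      rw [ENNReal.mul_rpow_of_nonneg _ _ h0.le, wgt_rpow hq h hu0]
                  _ ≤ _ := by
                      gcongr
                      exact hu.1.1
            _ = ENNReal.ofReal (x k)⁻¹ * y k ^ q.toReal * volume (Ico (x k) (x (k + 1)) ∩ S) := by
                rw [setLIntegral_const]
            _ ≤ ENNReal.ofReal (x k)⁻¹ * y k ^ q.toReal * volume (Ico (x k) (x (k + 1))) := by
                gcongr; exact inter_subset_left
            _ = ENNReal.ofReal ((x k)⁻¹ * (x (k + 1) - x k)) * y k ^ q.toReal := by
                rw [Real.volume_Ico, ENNReal.ofReal_mul (by positivity)]; ring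
            _ ≤ ENNReal.ofReal D * y k ^ q.toReal := by
                gcongr
                rw [inv_mul_le_iff₀ hxk]
                have := hx.le k
                linarith
      _ = _ := by rw [ENNReal.tsum_mul_left]

lemma le_LqNorm {q : ℝ≥0∞} (hq : 0 < q) (D : ℝ) :
    ∃ C : ℝ≥0, ∀ x, Grid D x → ∀ (S : Set ℝ) (G : ℝ → ℝ≥0∞) (y : ℤ → ℝ≥0∞),
      (∀ k, y k ≠ 0 → ∀ u ∈ Ioo (x k) (x (k + 1)), u ∈ S ∧
        ENNReal.ofReal (u ^ (-(q⁻¹.toReal))) * y k ≤ G u) →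
      lq q y ≤ C * LqNorm q S G := by
  by_cases h : q = ∞
  · refine ⟨1, fun x hx S G y hG => ?_⟩
    simp only [LqNorm, lq, h, if_true, ENNReal.coe_one, one_mul]
    refine iSup_le fun k => ?_
    by_cases hy : y k = 0
    · rw [hy]; exact zero_le
    have hsub : Ioo (x k) (x (k + 1)) ⊆ S := fun u hu => (hG k hy u hu).1
    have h1 : ∀ᵐ u ∂(volume.restrict (Ioo (x k) (x (k + 1)))),
        G u ≤ essSup G (volume.restrict S) :=
      ae_mono (Measure.restrict_mono hsub le_rfl) ae_le_essSup
    have h2 := h1.and (ae_restrict_mem measurableSet_Ioo)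
    have hlt : x k < x (k + 1) := hx.mono (lt_add_one k)
    have : NeBot (ae (volume.restrict (Ioo (x k) (x (k + 1))))) := by
      rw [ae_neBot]
      intro h0
      rw [Measure.restrict_eq_zero, Real.volume_Ioo] at h0
      have := ENNReal.ofReal_eq_zero.1 h0
      linarith
    obtain ⟨u, hu, hu'⟩ := h2.exists
    have := (hG k hy u hu').2
    simp only [h, ENNReal.inv_top, ENNReal.toReal_zero, neg_zero, Real.rpow_zero,
      ENNReal.ofReal_one, one_mul] at this
    exact this.trans hu
  · have h0 : (0:ℝ) < q.toReal := ENNReal.toReal_pos hq.ne' h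
    have h1 : (0:ℝ) ≤ q⁻¹.toReal := ENNReal.toReal_nonneg
    refine ⟨2 ^ q⁻¹.toReal, fun x hx S G y hG => ?_⟩
    simp only [LqNorm, lq, h, if_false]
    rw [ENNReal.coe_rpow_of_nonneg _ h1, ← ENNReal.mul_rpow_of_nonneg _ _ h1]
    refine ENNReal.rpow_le_rpow ?_ h1
    set J : ℤ → Set ℝ := fun k => {u | y k ≠ 0 ∧ u ∈ Ioo (x k) (x (k + 1))} with hJ
    have hJm : ∀ k, MeasurableSet (J k) := fun k =>
      (MeasurableSet.const _).inter measurableSet_Ioo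
    have hJd : Pairwise (Function.onFun Disjoint J) := by
      intro j k hjk
      refine Set.disjoint_left.2 fun u hu hu' => hjk ?_
      exact hx.disj (Ioo_subset_Ico_self hu.2) (Ioo_subset_Ico_self hu'.2)
    have hsub : (⋃ k, J k) ⊆ S := iUnion_subset fun k u hu => (hG k hu.1 u hu.2).1
    calc ∑' k, y k ^ q.toReal ≤ ∑' k, 2 * ∫⁻ t in J k, G t ^ q.toReal := by
          refine ENNReal.tsum_le_tsum fun k => ?_
          by_cases hy : y k = 0
          · rw [hy, ENNReal.zero_rpow_of_pos h0]; exact zero_le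
          have hJk : J k = Ioo (x k) (x (k + 1)) := by
            ext u; simp [hJ, hy]
          have hxk := hx.pos k
          have hxk1 := hx.pos (k + 1)
          calc y k ^ q.toReal ≤ 2 * (ENNReal.ofReal ((x (k + 1))⁻¹ * (x (k + 1) - x k))
                * y k ^ q.toReal) := by
                rw [← mul_assoc]
                refine le_mul_of_one_le_left zero_le ?_
                rw [show (2:ℝ≥0∞) = ENNReal.ofReal 2 by simp, ← ENNReal.ofReal_mul (by norm_num),
                  ENNReal.one_le_ofReal, ← mul_assoc, mul_comm (2:ℝ), mul_assoc,
                  le_inv_mul_iff₀ hxk1]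
                have := hx.two k
                linarith
            _ = 2 * ∫⁻ t in J k, ENNReal.ofReal (x (k + 1))⁻¹ * y k ^ q.toReal := by
                rw [setLIntegral_const, hJk, Real.volume_Ioo, ENNReal.ofReal_mul (by positivity)]
                ring
            _ ≤ 2 * ∫⁻ t in J k, G t ^ q.toReal := by
                gcongr 2 * ?_
                refine setLIntegral_mono' (hJm k) fun u hu => ?_
                have hu' := hu.2
                have hu0 : 0 < u := hxk.trans hu'.1
                calc ENNReal.ofReal (x (k + 1))⁻¹ * y k ^ q.toReal
                    ≤ ENNReal.ofReal u⁻¹ * y k ^ q.toReal := by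
                      gcongr; exact hu'.2.le
                  _ = (ENNReal.ofReal (u ^ (-(q⁻¹.toReal))) * y k) ^ q.toReal := by
                      rw [ENNReal.mul_rpow_of_nonneg _ _ h0.le, wgt_rpow hq h hu0]
                  _ ≤ _ := ENNReal.rpow_le_rpow (hG k hy u hu').2 h0.le
      _ = 2 * ∫⁻ t in ⋃ k, J k, G t ^ q.toReal := by
          rw [ENNReal.tsum_mul_left, lintegral_iUnion hJm hJd]
      _ ≤ _ := by
          push_cast
          gcongr
/-! ### Functions regular on dyadic blocks -/

lemma LqNorm_mono_set (q : ℝ≥0∞) {S T : Set ℝ} (h : S ⊆ T) (g : ℝ → ℝ≥0∞) :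
    LqNorm q S g ≤ LqNorm q T g := by
  unfold LqNorm
  split_ifs
  · exact essSup_mono_measure (Measure.absolutelyContinuous_of_le (Measure.restrict_mono h le_rfl))
  · exact ENNReal.rpow_le_rpow (lintegral_mono_set h) ENNReal.toReal_nonneg

lemma LqNorm_congr (q : ℝ≥0∞) {S : Set ℝ} (hS : MeasurableSet S) {g g' : ℝ → ℝ≥0∞}
    (h : ∀ u ∈ S, g u = g' u) : LqNorm q S g = LqNorm q S g' := by
  unfold LqNorm
  split_ifs
  · refine essSup_congr_ae ?_
    filter_upwards [ae_restrict_mem hS] with u hu using h u hu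
  · congr 1
    exact setLIntegral_congr_fun hS fun u hu => by simp only [h u hu]

lemma LqNorm_const_mul {q : ℝ≥0∞} (hq : 0 < q) (S : Set ℝ) (c : ℝ≥0) (g : ℝ → ℝ≥0∞) :
    LqNorm q S (fun u => c * g u) = c * LqNorm q S g := by
  unfold LqNorm
  split_ifs with h
  · exact ENNReal.essSup_const_mul
  · simp_rw [ENNReal.mul_rpow_of_nonneg _ _ (ENNReal.toReal_nonneg (a := q))]
    rw [lintegral_const_mul' _ _ (ENNReal.rpow_ne_top_of_nonneg ENNReal.toReal_nonneg
      ENNReal.coe_ne_top), ENNReal.mul_rpow_of_nonneg _ _ ENNReal.toReal_nonneg,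
      rpow_rpow_inv' hq h]

/-- Regularity (two-sided doubling) of a family of `ℝ≥0∞`-valued functions. -/
def RegE {α : Type*} (F : α → ℝ → ℝ≥0∞) : Prop :=
  ∀ B : ℝ, ∃ C : ℝ≥0, ∀ a, ∀ s t : ℝ, 0 < s → 0 < t → s ≤ B * t → t ≤ B * s → F a s ≤ C * F a t

/-- Regularity (two-sided doubling) of a positive function. -/
def Reg (b : ℝ → ℝ) : Prop :=
  (∀ t, 0 < t → 0 < b t) ∧ ∀ B : ℝ, ∃ C : ℝ, 0 < C ∧ ∀ s t : ℝ, 0 < s → 0 < t →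
    s ≤ B * t → t ≤ B * s → b s ≤ C * b t

lemma RegE.mul {α : Type*} {F G : α → ℝ → ℝ≥0∞} (hF : RegE F) (hG : RegE G) :
    RegE (fun a u => F a u * G a u) := by
  intro B
  obtain ⟨C, hC⟩ := hF B
  obtain ⟨C', hC'⟩ := hG B
  refine ⟨C * C', fun a s t hs ht h1 h2 => ?_⟩
  calc _ ≤ (C * F a t) * (C' * G a t) := mul_le_mul' (hC a s t hs ht h1 h2) (hC' a s t hs ht h1 h2)
    _ = _ := by push_cast; ring

lemma Reg.toE {b : ℝ → ℝ} (hb : Reg b) (α : Type*) :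
    RegE (fun (_ : α) u => ENNReal.ofReal (b u)) := by
  intro B
  obtain ⟨C, hC0, hC⟩ := hb.2 B
  refine ⟨C.toNNReal, fun a s t hs ht h1 h2 => ?_⟩
  refine (ENNReal.ofReal_le_ofReal (hC s t hs ht h1 h2)).trans ?_
  rw [ENNReal.ofReal_mul hC0.le]; rfl

lemma Reg.mul {b c : ℝ → ℝ} (hb : Reg b) (hc : Reg c) : Reg (fun u => b u * c u) := by
  refine ⟨fun t ht => mul_pos (hb.1 t ht) (hc.1 t ht), fun B => ?_⟩
  obtain ⟨C, hC0, hC⟩ := hb.2 B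
  obtain ⟨C', hC0', hC'⟩ := hc.2 B
  refine ⟨C * C', by positivity, fun s t hs ht h1 h2 => ?_⟩
  calc _ ≤ (C * b t) * (C' * c t) := mul_le_mul (hC s t hs ht h1 h2) (hC' s t hs ht h1 h2)
        (hc.1 s hs).le (mul_pos hC0 (hb.1 t ht)).le
    _ = _ := by ring

lemma Reg.inv {b : ℝ → ℝ} (hb : Reg b) : Reg (fun u => (b u)⁻¹) := by
  refine ⟨fun t ht => inv_pos.2 (hb.1 t ht), fun B => ?_⟩
  obtain ⟨C, hC0, hC⟩ := hb.2 B
  refine ⟨C, hC0, fun s t hs ht h1 h2 => ?_⟩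
  have := hC t s ht hs h2 h1
  have h3 := hb.1 s hs
  have h4 := hb.1 t ht
  rw [← div_eq_mul_inv, le_div_iff₀ h4, inv_mul_le_iff₀ h3, mul_comm]
  exact this

lemma Reg.div {b c : ℝ → ℝ} (hb : Reg b) (hc : Reg c) : Reg (fun u => b u / c u) := by
  simpa only [div_eq_mul_inv] using hb.mul hc.inv

lemma Reg.rpow_nonneg {b : ℝ → ℝ} (hb : Reg b) {p : ℝ} (hp : 0 ≤ p) :
    Reg (fun u => b u ^ p) := by
  refine ⟨fun t ht => Real.rpow_pos_of_pos (hb.1 t ht) p, fun B => ?_⟩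
  obtain ⟨C, hC0, hC⟩ := hb.2 B
  refine ⟨C ^ p, by positivity, fun s t hs ht h1 h2 => ?_⟩
  rw [← Real.mul_rpow hC0.le (hb.1 t ht).le]
  exact Real.rpow_le_rpow (hb.1 s hs).le (hC s t hs ht h1 h2) hp

lemma Reg.id : Reg (fun u => u) :=
  ⟨fun _ ht => ht, fun B => ⟨max B 1, by positivity, fun s t _ ht h1 _ =>
    h1.trans (mul_le_mul_of_nonneg_right (le_max_left _ _) ht.le)⟩⟩

lemma Reg.congr {b c : ℝ → ℝ} (hb : Reg b) (h : ∀ t, 0 < t → c t = b t) : Reg c := by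
  refine ⟨fun t ht => by rw [h t ht]; exact hb.1 t ht, fun B => ?_⟩
  obtain ⟨C, hC0, hC⟩ := hb.2 B
  refine ⟨C, hC0, fun s t hs ht h1 h2 => ?_⟩
  rw [h s hs, h t ht]
  exact hC s t hs ht h1 h2

lemma Reg.rpow {b : ℝ → ℝ} (hb : Reg b) (p : ℝ) : Reg (fun u => b u ^ p) := by
  rcases le_total 0 p with hp | hp
  · exact hb.rpow_nonneg hp
  · refine (hb.rpow_nonneg (neg_nonneg.2 hp)).inv.congr fun t ht => ?_
    rw [Real.rpow_neg (hb.1 t ht).le, inv_inv]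

lemma Reg.comp {b c : ℝ → ℝ} (hb : Reg b) (hc : Reg c) : Reg (fun u => b (c u)) := by
  refine ⟨fun t ht => hb.1 _ (hc.1 t ht), fun B => ?_⟩
  obtain ⟨C, hC0, hC⟩ := hc.2 B
  obtain ⟨C', hC0', hC'⟩ := hb.2 C
  exact ⟨C', hC0', fun s t hs ht h1 h2 => hC' _ _ (hc.1 s hs) (hc.1 t ht)
    (hC s t hs ht h1 h2) (hC t s ht hs h2 h1)⟩

lemma Grid.one_le {D : ℝ} {x : ℤ → ℝ} (h : Grid D x) : 2 ≤ D := by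
  have h1 := h.two 0
  have h2 := h.le 0
  have h3 := h.pos 0
  by_contra hlt
  push Not at hlt
  nlinarith

lemma Grid.near {D : ℝ} {x : ℤ → ℝ} (h : Grid D x) {k : ℤ} {u : ℝ}
    (hu : u ∈ Icc (x k) (x (k + 1))) : 0 < u ∧ u ≤ D * x k ∧ x k ≤ D * u := by
  have h1 := h.one_le
  have h2 := h.pos k
  have h3 := h.le k
  have h4 : 0 < u := h2.trans_le hu.1
  refine ⟨h4, hu.2.trans h3, hu.1.trans ?_⟩
  nlinarith

lemma Grid.near' {D : ℝ} {x : ℤ → ℝ} (h : Grid D x) {k : ℤ} {u : ℝ}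
    (hu : u ∈ Icc (x k) (x (k + 1))) : 0 < u ∧ u ≤ D * x (k + 1) ∧ x (k + 1) ≤ D * u := by
  have h1 := h.one_le
  have h2 := h.pos k
  have h3 := h.le k
  have h5 := h.pos (k + 1)
  have h4 : 0 < u := h2.trans_le hu.1
  refine ⟨h4, hu.2.trans ?_, h3.trans ?_⟩
  · nlinarith
  · have := hu.1
    nlinarith

lemma disc_full {α : Type*} {G : α → ℝ → ℝ≥0∞} (hG : RegE G) {q : ℝ≥0∞} (hq : 0 < q) (D : ℝ) :
    ∃ C : ℝ≥0, ∀ x, Grid D x → ∀ a,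
      LqNorm q (Ioi 0) (fun u => ENNReal.ofReal (u ^ (-(q⁻¹.toReal))) * G a u)
        ≤ C * lq q (fun k => G a (x k)) ∧
      lq q (fun k => G a (x k))
        ≤ C * LqNorm q (Ioi 0) (fun u => ENNReal.ofReal (u ^ (-(q⁻¹.toReal))) * G a u) := by
  obtain ⟨C1, h1⟩ := LqNorm_le hq D
  obtain ⟨C2, h2⟩ := le_LqNorm hq D
  obtain ⟨C3, h3⟩ := hG D
  refine ⟨(C1 + C2) * C3, fun x hx a => ⟨?_, ?_⟩⟩
  · calc _ ≤ C1 * lq q (fun k => C3 * G a (x k)) := by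
          refine h1 x hx _ measurableSet_Ioi (subset_refl _) _ _ fun k u hu _ => ?_
          obtain ⟨hu0, hu1, hu2⟩ := hx.near (Ico_subset_Icc_self hu)
          gcongr
          exact h3 a _ _ hu0 (hx.pos k) hu1 hu2
      _ = (C1 * C3) * lq q (fun k => G a (x k)) := by rw [lq_const_mul hq, mul_assoc]
      _ ≤ _ := by push_cast; gcongr; exact le_self_add
  · calc _ ≤ C2 * LqNorm q (Ioi 0)
          (fun u => C3 * (ENNReal.ofReal (u ^ (-(q⁻¹.toReal))) * G a u)) := by
          refine h2 x hx _ _ _ fun k _ u hu => ?_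
          obtain ⟨hu0, hu1, hu2⟩ := hx.near (Ioo_subset_Icc_self hu)
          refine ⟨hu0, ?_⟩
          rw [mul_left_comm]
          gcongr
          exact h3 a _ _ (hx.pos k) hu0 hu2 hu1
      _ = (C2 * C3) * LqNorm q (Ioi 0)
          (fun u => (ENNReal.ofReal (u ^ (-(q⁻¹.toReal))) * G a u)) := by
          rw [LqNorm_const_mul hq, mul_assoc]
      _ ≤ _ := by push_cast; gcongr; exact le_add_self

/-- Lower truncation of a sequence. -/
def lo (k : ℤ) (y : ℤ → ℝ≥0∞) : ℤ → ℝ≥0∞ := fun j => if j ≤ k then y j else 0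

/-- Upper truncation of a sequence. -/
def hi (k : ℤ) (y : ℤ → ℝ≥0∞) : ℤ → ℝ≥0∞ := fun j => if k ≤ j then y j else 0

lemma disc_lo {α : Type*} {G : α → ℝ → ℝ≥0∞} (hG : RegE G) {q : ℝ≥0∞} (hq : 0 < q) (D : ℝ) :
    ∃ C : ℝ≥0, ∀ x, Grid D x → ∀ k a,
      LqNorm q (Ioo 0 (x k)) (fun u => ENNReal.ofReal (u ^ (-(q⁻¹.toReal))) * G a u)
        ≤ C * lq q (lo k (fun j => G a (x j))) ∧
      lq q (lo k (fun j => G a (x j)))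
        ≤ C * LqNorm q (Ioo 0 (x k)) (fun u => ENNReal.ofReal (u ^ (-(q⁻¹.toReal))) * G a u) := by
  obtain ⟨C1, h1⟩ := LqNorm_le hq D
  obtain ⟨C2, h2⟩ := le_LqNorm hq D
  obtain ⟨C3, h3⟩ := hG D
  refine ⟨(C1 + C2) * C3, fun x hx k a => ⟨?_, ?_⟩⟩
  · calc _ ≤ C1 * lq q (fun j => C3 * lo k (fun j => G a (x j)) j) := by
          refine h1 x hx _ measurableSet_Ioo (fun u hu => hu.1) _ _ fun j u hu hu' => ?_
          obtain ⟨hu0, hu1, hu2⟩ := hx.near (Ico_subset_Icc_self hu)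
          gcongr
          have : j < k := hx.mono.lt_iff_lt.1 (hu.1.trans_lt hu'.2)
          rw [lo, if_pos this.le]
          exact h3 a _ _ hu0 (hx.pos j) hu1 hu2
      _ = (C1 * C3) * lq q (lo k (fun j => G a (x j))) := by rw [lq_const_mul hq, mul_assoc]
      _ ≤ _ := by push_cast; gcongr; exact le_self_add
  · rw [← lq_shift q _ 1]
    calc _ ≤ C2 * LqNorm q (Ioo 0 (x k))
          (fun u => C3 * (ENNReal.ofReal (u ^ (-(q⁻¹.toReal))) * G a u)) := by
          refine h2 x hx _ _ _ fun j hj u hu => ?_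
          obtain ⟨hu0, hu1, hu2⟩ := hx.near' (Ioo_subset_Icc_self hu)
          have hjk : j + 1 ≤ k := by
            by_contra hlt
            exact hj (if_neg hlt)
          refine ⟨⟨hu0, hu.2.trans_le (hx.mono.monotone hjk)⟩, ?_⟩
          rw [mul_left_comm, lo, if_pos hjk]
          gcongr
          exact h3 a _ _ (hx.pos _) hu0 hu2 hu1
      _ = (C2 * C3) * LqNorm q (Ioo 0 (x k))
          (fun u => (ENNReal.ofReal (u ^ (-(q⁻¹.toReal))) * G a u)) := by
          rw [LqNorm_const_mul hq, mul_assoc]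
      _ ≤ _ := by push_cast; gcongr; exact le_add_self

lemma disc_hi {α : Type*} {G : α → ℝ → ℝ≥0∞} (hG : RegE G) {q : ℝ≥0∞} (hq : 0 < q) (D : ℝ) :
    ∃ C : ℝ≥0, ∀ x, Grid D x → ∀ k a,
      LqNorm q (Ioi (x k)) (fun u => ENNReal.ofReal (u ^ (-(q⁻¹.toReal))) * G a u)
        ≤ C * lq q (hi k (fun j => G a (x j))) ∧
      lq q (hi k (fun j => G a (x j)))
        ≤ C * LqNorm q (Ioi (x k)) (fun u => ENNReal.ofReal (u ^ (-(q⁻¹.toReal))) * G a u) := by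
  obtain ⟨C1, h1⟩ := LqNorm_le hq D
  obtain ⟨C2, h2⟩ := le_LqNorm hq D
  obtain ⟨C3, h3⟩ := hG D
  refine ⟨(C1 + C2) * C3, fun x hx k a => ⟨?_, ?_⟩⟩
  · calc _ ≤ C1 * lq q (fun j => C3 * hi k (fun j => G a (x j)) j) := by
          refine h1 x hx _ measurableSet_Ioi (fun u hu => (hx.pos k).trans hu) _ _
            fun j u hu hu' => ?_
          obtain ⟨hu0, hu1, hu2⟩ := hx.near (Ico_subset_Icc_self hu)
          gcongr
          have : k < j + 1 := hx.mono.lt_iff_lt.1 (lt_trans hu' hu.2)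
          rw [hi, if_pos (by omega)]
          exact h3 a _ _ hu0 (hx.pos j) hu1 hu2
      _ = (C1 * C3) * lq q (hi k (fun j => G a (x j))) := by rw [lq_const_mul hq, mul_assoc]
      _ ≤ _ := by push_cast; gcongr; exact le_self_add
  · calc _ ≤ C2 * LqNorm q (Ioi (x k))
          (fun u => C3 * (ENNReal.ofReal (u ^ (-(q⁻¹.toReal))) * G a u)) := by
          refine h2 x hx _ _ _ fun j hj u hu => ?_
          obtain ⟨hu0, hu1, hu2⟩ := hx.near (Ioo_subset_Icc_self hu)
          have hjk : k ≤ j := by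
            by_contra hlt
            exact hj (if_neg hlt)
          refine ⟨(hx.mono.monotone hjk).trans_lt hu.1, ?_⟩
          rw [mul_left_comm, hi, if_pos hjk]
          gcongr
          exact h3 a _ _ (hx.pos _) hu0 hu2 hu1
      _ = (C2 * C3) * LqNorm q (Ioi (x k))
          (fun u => (ENNReal.ofReal (u ^ (-(q⁻¹.toReal))) * G a u)) := by
          rw [LqNorm_const_mul hq, mul_assoc]
      _ ≤ _ := by push_cast; gcongr; exact le_add_self

lemma grid_geo {B t : ℝ} (hB : 2 ≤ B) (ht : 0 < t) : Grid B (fun k : ℤ => t * B ^ k) := by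
  have hB0 : 0 < B := by linarith
  refine ⟨fun k => by positivity, fun k => ?_, fun k => ?_⟩
  · have : 0 < t * B ^ k := by positivity
    rw [zpow_add_one₀ hB0.ne']
    nlinarith
  · rw [zpow_add_one₀ hB0.ne']
    exact le_of_eq (by ring)

lemma regE_lo {α : Type*} {G : α → ℝ → ℝ≥0∞} (hG : RegE G) {q : ℝ≥0∞} (hq : 0 < q) :
    RegE (fun a t => LqNorm q (Ioo 0 t)
      (fun u => ENNReal.ofReal (u ^ (-(q⁻¹.toReal))) * G a u)) := by
  intro B
  obtain ⟨C1, h1⟩ := disc_lo hG hq (max B 2)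
  obtain ⟨C3, h3⟩ := hG (max B 2)
  refine ⟨C1 * (C3 * C1), fun a s t hs ht hst hts => ?_⟩
  have hx := grid_geo (le_max_right B 2) ht
  set x : ℤ → ℝ := fun k => t * (max B 2) ^ k with hxdef
  have hx0 : x 0 = t := by simp [hxdef]
  have hx1 : s ≤ x 1 := by
    simp only [hxdef, zpow_one]
    rw [mul_comm]
    exact hst.trans (mul_le_mul_of_nonneg_right (le_max_left _ _) ht.le)
  calc _ ≤ LqNorm q (Ioo 0 (x 1)) (fun u => ENNReal.ofReal (u ^ (-(q⁻¹.toReal))) * G a u) :=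
        LqNorm_mono_set q (Ioo_subset_Ioo_right hx1) _
    _ ≤ C1 * lq q (lo 1 (fun j => G a (x j))) := (h1 x hx 1 a).1
    _ = C1 * lq q (fun j => lo 1 (fun j => G a (x j)) (j + 1)) := by
        rw [← lq_shift q _ 1]
    _ ≤ C1 * lq q (fun j => C3 * lo 0 (fun j => G a (x j)) j) := by
        gcongr
        refine lq_mono q fun j => ?_
        unfold lo
        by_cases hj : j ≤ 0
        · rw [if_pos (by omega), if_pos hj]
          obtain ⟨e0, e1, e2⟩ := hx.near (k := j) (right_mem_Icc.2 (hx.mono (lt_add_one j)).le)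
          exact h3 a _ _ e0 (hx.pos j) e1 e2
        · rw [if_neg (by omega)]; exact zero_le
    _ = C1 * (C3 * lq q (lo 0 (fun j => G a (x j)))) := by rw [lq_const_mul hq]
    _ ≤ C1 * (C3 * (C1 * LqNorm q (Ioo 0 (x 0))
          (fun u => ENNReal.ofReal (u ^ (-(q⁻¹.toReal))) * G a u))) := by
        gcongr
        exact (h1 x hx 0 a).2
    _ = _ := by rw [hx0]; push_cast; ring

lemma regE_hi {α : Type*} {G : α → ℝ → ℝ≥0∞} (hG : RegE G) {q : ℝ≥0∞} (hq : 0 < q) :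
    RegE (fun a t => LqNorm q (Ioi t)
      (fun u => ENNReal.ofReal (u ^ (-(q⁻¹.toReal))) * G a u)) := by
  intro B
  obtain ⟨C1, h1⟩ := disc_hi hG hq (max B 2)
  obtain ⟨C3, h3⟩ := hG (max B 2)
  refine ⟨C1 * (C3 * C1), fun a s t hs ht hst hts => ?_⟩
  have hx := grid_geo (le_max_right B 2) hs
  set x : ℤ → ℝ := fun k => s * (max B 2) ^ k with hxdef
  have hx0 : x 0 = s := by simp [hxdef]
  have hx1 : t ≤ x 1 := by
    simp only [hxdef, zpow_one]
    rw [mul_comm]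
    exact hts.trans (mul_le_mul_of_nonneg_right (le_max_left _ _) hs.le)
  calc LqNorm q (Ioi s) (fun u => ENNReal.ofReal (u ^ (-(q⁻¹.toReal))) * G a u)
      = LqNorm q (Ioi (x 0)) (fun u => ENNReal.ofReal (u ^ (-(q⁻¹.toReal))) * G a u) := by rw [hx0]
    _ ≤ C1 * lq q (hi 0 (fun j => G a (x j))) := (h1 x hx 0 a).1
    _ ≤ C1 * lq q (fun j => C3 * hi 1 (fun j => G a (x j)) (j + 1)) := by
        gcongr
        refine lq_mono q fun j => ?_
        unfold hi
        by_cases hj : 0 ≤ j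
        · rw [if_pos (by omega), if_pos (by omega)]
          obtain ⟨e0, e1, e2⟩ := hx.near (k := j) (right_mem_Icc.2 (hx.mono (lt_add_one j)).le)
          exact h3 a _ _ (hx.pos j) e0 e2 e1
        · rw [if_neg hj]; exact zero_le
    _ = C1 * (C3 * lq q (hi 1 (fun j => G a (x j)))) := by
        rw [lq_const_mul hq, lq_shift q _ 1]
    _ ≤ C1 * (C3 * (C1 * LqNorm q (Ioi (x 1))
          (fun u => ENNReal.ofReal (u ^ (-(q⁻¹.toReal))) * G a u))) := by
        gcongr
        exact (h1 x hx 1 a).2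
    _ ≤ C1 * (C3 * (C1 * LqNorm q (Ioi t)
          (fun u => ENNReal.ofReal (u ^ (-(q⁻¹.toReal))) * G a u))) := by
        gcongr
        exact LqNorm_mono_set q (Ioi_subset_Ioi hx1) _
    _ = _ := by push_cast; ring
/-! ### The discrete estimates -/

lemma lo_mono {k : ℤ} {y z : ℤ → ℝ≥0∞} (h : ∀ j ≤ k, y j ≤ z j) (j : ℤ) : lo k y j ≤ lo k z j := by
  unfold lo
  split_ifs with hj
  · exact h j hj
  · exact le_rfl

lemma hi_mono {k : ℤ} {y z : ℤ → ℝ≥0∞} (h : ∀ j, k ≤ j → y j ≤ z j) (j : ℤ) :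
    hi k y j ≤ hi k z j := by
  unfold hi
  split_ifs with hj
  · exact h j hj
  · exact le_rfl

lemma lo_le (k : ℤ) (y : ℤ → ℝ≥0∞) (j : ℤ) : lo k y j ≤ y j := by
  unfold lo
  split_ifs with hj
  · exact le_rfl
  · exact zero_le

lemma pow_lt_one3 {τ : ℝ≥0} (hτ : τ < 1) : ((τ : ℝ≥0∞) ^ 3) < 1 := by
  have : τ ^ 3 < 1 := pow_lt_one₀ zero_le hτ (by norm_num)
  exact_mod_cast this

lemma N0_bound {r₀ : ℝ≥0∞} (hr₀ : 0 < r₀) {w : ℤ → ℝ≥0∞} {mn : ℤ → ℤ → ℝ≥0∞} {τ : ℝ≥0}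
    (hτ : τ < 1) {C₀ : ℝ≥0}
    (hw : ∀ j k, w j * mn j k ≤ C₀ * ((τ : ℝ≥0∞) ^ 3) ^ (j - k).natAbs * w k) (Q : ℝ≥0) :
    ∃ C : ℝ≥0, ∀ (k : ℤ) (e : ℝ≥0∞) (κg κf : ℤ → ℝ≥0∞),
      (∀ j, κg j ≤ Q * (lo k κf j + mn j k * e)) →
      lq r₀ (fun j => w j * κg j) ≤ C * (lq r₀ (lo k (fun j => w j * κf j)) + w k * e) := by
  obtain ⟨C1, h1⟩ := lq_add hr₀
  obtain ⟨C2, h2⟩ := lq_le_sup hr₀ (pow_lt_one3 hτ)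
  refine ⟨Q * C1 * (1 + C2 * C₀), fun k e κg κf h => ?_⟩
  calc lq r₀ (fun j => w j * κg j)
      ≤ lq r₀ (fun j => Q * (lo k (fun j => w j * κf j) j + w j * mn j k * e)) := by
        refine lq_mono _ fun j => ?_
        calc w j * κg j ≤ w j * (Q * (lo k κf j + mn j k * e)) := by gcongr; exact h j
          _ = Q * (w j * lo k κf j + w j * mn j k * e) := by ring
          _ = _ := by simp only [lo, mul_ite, mul_zero]
    _ ≤ Q * (C1 * (lq r₀ (lo k (fun j => w j * κf j)) + lq r₀ (fun j => w j * mn j k * e))) := by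
        rw [lq_const_mul hr₀]
        gcongr
        exact h1 _ _
    _ ≤ Q * (C1 * (lq r₀ (lo k (fun j => w j * κf j)) + C2 * (C₀ * (w k * e)))) := by
        gcongr
        refine h2 k _ _ fun j => ?_
        calc _ ≤ C₀ * ((τ : ℝ≥0∞) ^ 3) ^ (j - k).natAbs * w k * e := by
              have := hw j k
              gcongr ?_ * e
          _ = _ := by ring
    _ ≤ Q * (C1 * ((1 + C2 * C₀) * lq r₀ (lo k (fun j => w j * κf j))
          + (1 + C2 * C₀) * (w k * e))) := by
        rw [← mul_assoc (C2 : ℝ≥0∞)]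
        gcongr
        · exact le_mul_of_one_le_left zero_le le_self_add
        · exact le_add_self
    _ = _ := by push_cast; ring

/-- The second term of the Holmstedt-type formula. -/
def Jd (r₁ q₁ : ℝ≥0∞) (β w : ℤ → ℝ≥0∞) (k : ℤ) (κ : ℤ → ℝ≥0∞) : ℝ≥0∞ :=
  lq r₁ (fun m => β m * lq q₁ (lo m (hi k (fun j => w j * κ j))))

lemma N1_bound {r₁ q₁ : ℝ≥0∞} (hr₁ : 0 < r₁) (hq₁ : 0 < q₁) {β w d : ℤ → ℝ≥0∞}
    {mn : ℤ → ℤ → ℝ≥0∞} {τ : ℝ≥0} (hτ : τ < 1) {C₀ C₁ C₂ : ℝ≥0}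
    (hw : ∀ j k, w j * mn j k ≤ C₀ * ((τ : ℝ≥0∞) ^ 3) ^ (j - k).natAbs * w k)
    (hβ : ∀ (k : ℤ) (n : ℕ), (τ : ℝ≥0∞) ^ n * β k ≤ C₁ * β (k + n))
    (hd : ∀ k, lq r₁ (hi k β) ≤ C₂ * d k) (Q : ℝ≥0) :
    ∃ C : ℝ≥0, ∀ (k : ℤ) (e : ℝ≥0∞) (κg κf : ℤ → ℝ≥0∞),
      (∀ j, κg j ≤ Q * (hi k κf j + mn j k * e)) →
      lq r₁ (fun m => β m * lq q₁ (lo m (fun j => w j * κg j)))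
        ≤ C * (Jd r₁ q₁ β w k κf + w k * d k * e) := by
  have hγ := pow_lt_one3 hτ
  obtain ⟨Cq, hCq⟩ := lq_add hq₁
  obtain ⟨Cr, hCr⟩ := lq_add hr₁
  obtain ⟨C3, h3⟩ := lq_le_sup hq₁ hγ
  have hτ1 : (τ : ℝ≥0∞) < 1 := by exact_mod_cast hτ
  obtain ⟨C4, h4⟩ := lq_le_sup hr₁ hτ1
  -- the inner estimate
  have inner : ∀ k m : ℤ, lq q₁ (lo m (fun j => w j * mn j k)) ≤
      C3 * (C₀ * ((τ : ℝ≥0∞) ^ 3) ^ (k - m).toNat * w k) := by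
    intro k m
    by_cases hkm : k ≤ m
    · refine h3 k _ _ fun j => (lo_le _ _ _).trans ((hw j k).trans (le_of_eq ?_))
      have : (k - m).toNat = 0 := by omega
      rw [this, pow_zero]; ring
    · refine h3 m _ _ fun j => ?_
      unfold lo
      split_ifs with hj
      · refine (hw j k).trans (le_of_eq ?_)
        have : (j - k).natAbs = (j - m).natAbs + (k - m).toNat := by omega
        rw [this, pow_add]; ring
      · exact zero_le
  have hβd : ∀ k, β k ≤ C₂ * d k := fun k => by
    refine le_trans ?_ (hd k)
    refine le_trans (le_of_eq ?_) (le_lq hr₁ (hi k β) k)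
    simp [hi]
  have outer : ∀ k : ℤ, lq r₁ (fun m => β m * ((τ : ℝ≥0∞) ^ 3) ^ (k - m).toNat) ≤
      (Cr * (1 + C4 * C₁) * C₂) * d k := by
    intro k
    calc _ ≤ lq r₁ (fun m => hi k β m + (τ : ℝ≥0∞) ^ (m - k).natAbs * (C₁ * β k)) := by
          refine lq_mono _ fun m => ?_
          by_cases hkm : k ≤ m
          · have : (k - m).toNat = 0 := by omega
            rw [this, pow_zero, mul_one, hi, if_pos hkm]
            exact le_self_add
          · refine le_trans ?_ le_add_self
            have e1 : (k - m).toNat = (m - k).natAbs := by omega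
            have e2 : m + ((m - k).natAbs : ℤ) = k := by omega
            have e3 := hβ m (m - k).natAbs
            rw [e2] at e3
            rw [e1]
            set n := (m - k).natAbs
            calc β m * ((τ : ℝ≥0∞) ^ 3) ^ n = (τ : ℝ≥0∞) ^ n * ((τ : ℝ≥0∞) ^ n * β m) *
                  (τ : ℝ≥0∞) ^ n := by rw [← pow_mul]; ring
              _ ≤ (τ : ℝ≥0∞) ^ n * (C₁ * β k) * 1 := by
                  gcongr
                  exact pow_le_one' hτ1.le n
              _ = _ := mul_one _
      _ ≤ Cr * (lq r₁ (hi k β) + C4 * (C₁ * β k)) := by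
          refine (hCr _ _).trans ?_
          gcongr
          exact h4 k _ _ fun m => le_rfl
      _ ≤ Cr * (C₂ * d k + C4 * (C₁ * (C₂ * d k))) := by
          gcongr
          · exact hd k
          · exact hβd k
      _ = _ := by ring
  refine ⟨Q * Cq * Cr * (1 + C3 * C₀ * (Cr * (1 + C4 * C₁) * C₂)), fun k e κg κf h => ?_⟩
  set M : ℝ≥0∞ := C3 * C₀ * (Cr * (1 + C4 * C₁) * C₂) with hM
  calc lq r₁ (fun m => β m * lq q₁ (lo m (fun j => w j * κg j)))
      ≤ lq r₁ (fun m => (Q * Cq) * (β m * lq q₁ (lo m (hi k (fun j => w j * κf j)))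
          + (C3 * C₀ * w k * e) * (β m * ((τ : ℝ≥0∞) ^ 3) ^ (k - m).toNat))) := by
        refine lq_mono _ fun m => ?_
        calc β m * lq q₁ (lo m (fun j => w j * κg j))
            ≤ β m * lq q₁ (fun j => Q * (lo m (hi k (fun j => w j * κf j)) j
                + e * lo m (fun j => w j * mn j k) j)) := by
              gcongr
              refine lq_mono _ fun j => ?_
              unfold lo
              split_ifs with hj
              · calc w j * κg j ≤ w j * (Q * (hi k κf j + mn j k * e)) := by gcongr; exact h j
                  _ = Q * (w j * hi k κf j + e * (w j * mn j k)) := by ring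
                  _ = _ := by simp only [hi, mul_ite, mul_zero]
              · exact zero_le
          _ ≤ β m * (Q * (Cq * (lq q₁ (lo m (hi k (fun j => w j * κf j)))
                + e * (C3 * (C₀ * ((τ : ℝ≥0∞) ^ 3) ^ (k - m).toNat * w k))))) := by
              rw [lq_const_mul hq₁]
              gcongr
              refine (hCq _ _).trans ?_
              rw [lq_const_mul hq₁]
              gcongr
              exact inner k m
          _ = _ := by ring
    _ ≤ (Q * Cq) * (Cr * (Jd r₁ q₁ β w k κf +
          (C3 * C₀ * w k * e) * ((Cr * (1 + C4 * C₁) * C₂) * d k))) := by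
        rw [lq_const_mul hr₁]
        gcongr
        refine (hCr _ _).trans ?_
        rw [lq_const_mul hr₁]
        gcongr
        · exact le_rfl
        · exact outer k
    _ = (Q * Cq) * (Cr * (1 * Jd r₁ q₁ β w k κf + M * (w k * d k * e))) := by
        rw [hM]; ring
    _ ≤ (Q * Cq) * (Cr * ((1 + M) * Jd r₁ q₁ β w k κf + (1 + M) * (w k * d k * e))) := by
        gcongr
        · exact le_self_add
        · exact le_add_self
    _ = _ := by rw [hM]; push_cast; ring

lemma I_low {r₁ q₁ r₀ : ℝ≥0∞} (hr₁ : 0 < r₁) (hq₁ : 0 < q₁) (hr₀ : 0 < r₀)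
    {β w d w₀ ρ : ℤ → ℝ≥0∞} {C₂ : ℝ≥0}
    (hd : ∀ k, d k ≤ C₂ * lq r₁ (hi k β)) (hw₀ : ∀ k, w₀ k = ρ k * w k * d k)
    (hρ : ∀ (k : ℤ) (n : ℕ), ρ k ≤ (2⁻¹ : ℝ≥0∞) ^ n * ρ (k + n)) :
    ∃ C : ℝ≥0, ∀ (k : ℤ) (κ : ℤ → ℝ≥0∞),
      lq r₀ (lo k (fun j => w₀ j * κ j)) ≤
        C * (ρ k * lq r₁ (fun m => β m * lq q₁ (lo m (fun j => w j * κ j)))) := by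
  obtain ⟨C, hC⟩ := lq_le_sup hr₀ (γ := 2⁻¹) (by simp)
  refine ⟨C * C₂, fun k κ => ?_⟩
  set N := lq r₁ (fun m => β m * lq q₁ (lo m (fun j => w j * κ j))) with hN
  have h1 : ∀ j, d j * (w j * κ j) ≤ C₂ * N := by
    intro j
    calc d j * (w j * κ j) ≤ C₂ * lq r₁ (hi j β) * (w j * κ j) := by
          have := hd j
          gcongr
      _ = C₂ * lq r₁ (fun m => (w j * κ j) * hi j β m) := by
          rw [lq_const_mul hr₁]; ring
      _ ≤ C₂ * N := by
          gcongr
          refine lq_mono _ fun m => ?_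
          unfold hi
          split_ifs with hjm
          · rw [mul_comm]
            gcongr
            refine le_trans (le_of_eq ?_) (le_lq hq₁ _ j)
            rw [lo, if_pos hjm]
          · simp
  calc _ ≤ C * (C₂ * (ρ k * N)) := by
        refine hC k _ _ fun j => ?_
        unfold lo
        split_ifs with hj
        · have e1 := hρ j (j - k).natAbs
          rw [show j + ((j - k).natAbs : ℤ) = k by omega] at e1
          calc w₀ j * κ j = ρ j * (d j * (w j * κ j)) := by rw [hw₀]; ring
            _ ≤ ((2⁻¹ : ℝ≥0∞) ^ (j - k).natAbs * ρ k) * (C₂ * N) := by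
                exact mul_le_mul' e1 (h1 j)
            _ = _ := by ring
        · exact zero_le
    _ = _ := by push_cast; ring

lemma I_bound {r r₀ : ℝ≥0∞} (hr : 0 < r) (hr₀ : 0 < r₀) {v : ℤ → ℝ≥0∞} {τ : ℝ≥0} (hτ : τ < 1)
    {C₀ : ℝ≥0} (hv : ∀ (k : ℤ) (n : ℕ), v (k + n) ≤ C₀ * ((τ : ℝ≥0∞) ^ 3) ^ n * v k) :
    ∃ C : ℝ≥0, ∀ y : ℤ → ℝ≥0∞,
      lq r (fun k => v k * lq r₀ (lo k y)) ≤ C * lq r (fun k => v k * y k) := by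
  have hτ1 : (τ : ℝ≥0∞) < 1 := by exact_mod_cast hτ
  obtain ⟨C1, h1⟩ := lq_hardy_sup hr hτ1
  obtain ⟨C2, h2⟩ := lq_le_sup hr₀ hτ1
  refine ⟨C2 * C₀ * C1, fun y => ?_⟩
  calc _ ≤ lq r (fun k => (C2 * C₀) * ⨆ j, (τ : ℝ≥0∞) ^ (k - j).natAbs * (v j * y j)) := by
        refine lq_mono _ fun k => ?_
        rw [← lq_const_mul hr₀, mul_assoc]
        refine h2 k _ _ fun j => ?_
        unfold lo
        split_ifs with hj
        · have e1 := hv j (j - k).natAbs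
          rw [show j + ((j - k).natAbs : ℤ) = k by omega] at e1
          have e2 := le_iSup (fun j => (τ : ℝ≥0∞) ^ (k - j).natAbs * (v j * y j)) j
          rw [show (k - j).natAbs = (j - k).natAbs by omega] at e2
          set n := (j - k).natAbs
          calc v k * y j ≤ (C₀ * ((τ : ℝ≥0∞) ^ 3) ^ n * v j) * y j := by gcongr
            _ = (τ : ℝ≥0∞) ^ n * (C₀ * ((τ : ℝ≥0∞) ^ n * (v j * y j))) * (τ : ℝ≥0∞) ^ n := by
                rw [← pow_mul]; ring
            _ ≤ (τ : ℝ≥0∞) ^ n * (C₀ * ⨆ j, (τ : ℝ≥0∞) ^ (k - j).natAbs * (v j * y j)) * 1 := by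
                gcongr
                exact pow_le_one' hτ1.le n
            _ = _ := mul_one _
        · simp
    _ ≤ (C2 * C₀) * (C1 * lq r (fun k => v k * y k)) := by
        rw [lq_const_mul hr]
        gcongr
        exact h1 _
    _ = _ := by push_cast; ring

lemma J_bound {r r₁ q₁ : ℝ≥0∞} (hr : 0 < r) (hr₁ : 0 < r₁) (hq₁ : 0 < q₁)
    {β w d v : ℤ → ℝ≥0∞} {τ : ℝ≥0} (hτ : τ < 1) {C₀ C₁ C₂ : ℝ≥0}
    (hv : ∀ (k : ℤ) (n : ℕ), v k ≤ C₀ * ((τ : ℝ≥0∞) ^ 3) ^ n * v (k + n))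
    (hβ : ∀ (k : ℤ) (n : ℕ), (τ : ℝ≥0∞) ^ n * β k ≤ C₁ * β (k + n))
    (hd : ∀ k, lq r₁ (hi k β) ≤ C₂ * d k) (hd' : ∀ k, d k ≤ C₂ * lq r₁ (hi k β))
    (hd0 : ∀ k, d k ≠ 0) (hdt : ∀ k, d k ≠ ∞) :
    ∃ C : ℝ≥0, ∀ κ : ℤ → ℝ≥0∞,
      lq r (fun k => v k * Jd r₁ q₁ β w k κ) ≤ C * lq r (fun k => v k * (w k * d k * κ k)) := by
  have hτ1 : (τ : ℝ≥0∞) < 1 := by exact_mod_cast hτ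
  obtain ⟨C3, h3⟩ := lq_hardy_sup hr hτ1
  obtain ⟨C4, h4⟩ := lq_le_sup hq₁ hτ1
  -- slow variation of `d`
  have slow : ∀ (k : ℤ) (n : ℕ), (τ : ℝ≥0∞) ^ n * d k ≤ (C₂ * C₁ * C₂) * d (k + n) := by
    intro k n
    calc (τ : ℝ≥0∞) ^ n * d k ≤ (τ : ℝ≥0∞) ^ n * (C₂ * lq r₁ (hi k β)) := by
          gcongr; exact hd' k
      _ = C₂ * lq r₁ (fun j => (τ : ℝ≥0∞) ^ n * hi k β j) := by
          rw [lq_const_mul hr₁]; ring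
      _ ≤ C₂ * lq r₁ (fun j => C₁ * hi (k + n) β (j + n)) := by
          gcongr
          refine lq_mono _ fun j => ?_
          unfold hi
          by_cases hj : k ≤ j
          · rw [if_pos hj, if_pos (by omega)]
            exact hβ j n
          · rw [if_neg hj]; simp
      _ = C₂ * (C₁ * lq r₁ (hi (k + n) β)) := by
          rw [lq_const_mul hr₁, lq_shift r₁ (hi (k + n) β) n]
      _ ≤ C₂ * (C₁ * (C₂ * d (k + n))) := by
          gcongr; exact hd _
      _ = _ := by ring
  refine ⟨C₂ * C4 * (C₀ * (C₂ * C₁ * C₂)) * C3, fun κ => ?_⟩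
  set S : ℤ → ℝ≥0∞ := fun k => ⨆ j, (τ : ℝ≥0∞) ^ (k - j).natAbs * (v j * (w j * d j * κ j)) with hS
  have key : ∀ k, v k * Jd r₁ q₁ β w k κ ≤ (C₂ * C4 * (C₀ * (C₂ * C₁ * C₂))) * S k := by
    intro k
    rw [← ENNReal.mul_le_mul_iff_right (hd0 k) (hdt k)]
    set P : ℝ≥0∞ := C4 * (C₀ * (C₂ * C₁ * C₂) * S k) with hP
    have inner : ∀ m, (d k * v k) * lq q₁ (lo m (hi k (fun j => w j * κ j))) ≤ P := by
      intro m
      rw [← lq_const_mul hq₁]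
      refine h4 k _ _ fun j => ?_
      unfold lo
      split_ifs with hjm
      · unfold hi
        split_ifs with hkj
        · have e1 := hv k (j - k).natAbs
          have e3 := slow k (j - k).natAbs
          rw [show k + ((j - k).natAbs : ℤ) = j by omega] at e1 e3
          have e2 := le_iSup (fun j => (τ : ℝ≥0∞) ^ (k - j).natAbs * (v j * (w j * d j * κ j))) j
          rw [show (k - j).natAbs = (j - k).natAbs by omega] at e2
          set n := (j - k).natAbs
          calc d k * v k * (w j * κ j)
              ≤ d k * (C₀ * ((τ : ℝ≥0∞) ^ 3) ^ n * v j) * (w j * κ j) := by gcongr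
            _ = (τ : ℝ≥0∞) ^ n * (C₀ * (((τ : ℝ≥0∞) ^ n * d k) *
                  ((τ : ℝ≥0∞) ^ n * (v j * (w j * κ j))))) := by rw [← pow_mul]; ring
            _ ≤ (τ : ℝ≥0∞) ^ n * (C₀ * (((C₂ * C₁ * C₂) * d j) *
                  ((τ : ℝ≥0∞) ^ n * (v j * (w j * κ j))))) := by gcongr
            _ = (τ : ℝ≥0∞) ^ n * (C₀ * (C₂ * C₁ * C₂) *
                  ((τ : ℝ≥0∞) ^ n * (v j * (w j * d j * κ j)))) := by ring
            _ ≤ _ := by gcongr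
        · simp
      · simp
    calc d k * (v k * Jd r₁ q₁ β w k κ)
        = lq r₁ (fun m => (d k * v k) * (β m * lq q₁ (lo m (hi k (fun j => w j * κ j))))) := by
          rw [lq_const_mul hr₁, Jd]; ring
      _ ≤ lq r₁ (fun m => P * hi k β m) := by
          refine lq_mono _ fun m => ?_
          by_cases hkm : k ≤ m
          · rw [hi, if_pos hkm, mul_left_comm, mul_comm P]
            gcongr
            exact inner m
          · have : lq q₁ (lo m (hi k (fun j => w j * κ j))) = 0 := by
              have e : lo m (hi k (fun j => w j * κ j)) = fun j => 0 * (0 : ℝ≥0∞) := by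
                funext j
                unfold lo hi
                split_ifs <;> first | omega | simp
              rw [e, lq_const_mul hq₁ 0 (fun _ => 0), zero_mul]
            rw [this]; simp
      _ ≤ P * (C₂ * d k) := by
          rw [lq_const_mul hr₁]
          gcongr
          exact hd k
      _ = _ := by rw [hP]; ring
  calc _ ≤ lq r (fun k => (C₂ * C4 * (C₀ * (C₂ * C₁ * C₂))) * S k) := lq_mono _ key
    _ ≤ (C₂ * C4 * (C₀ * (C₂ * C₁ * C₂))) * (C3 * lq r (fun k => v k * (w k * d k * κ k))) := by
        rw [lq_const_mul hr]
        gcongr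
        exact h3 _
    _ = _ := by push_cast; ring
/-! ### The K-functional -/

lemma Kf_regE (N₀ N₁ : E → ℝ≥0∞) : RegE (fun f t => Kf N₀ N₁ t f) := by
  intro B
  refine ⟨max 1 B.toNNReal, fun f s t hs ht h1 h2 => ?_⟩
  have h1' : (1 : ℝ≥0∞) ≤ ((max 1 B.toNNReal : ℝ≥0) : ℝ≥0∞) := by
    exact_mod_cast le_max_left _ _
  have h2' : ENNReal.ofReal B ≤ ((max 1 B.toNNReal : ℝ≥0) : ℝ≥0∞) :=
    ENNReal.coe_le_coe.2 (le_max_right 1 B.toNNReal)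
  set M : ℝ≥0∞ := ((max 1 B.toNNReal : ℝ≥0) : ℝ≥0∞)
  have hM0 : M ≠ 0 := (zero_lt_one.trans_le h1').ne'
  have hM : M ≠ ∞ := ENNReal.coe_ne_top
  simp only [Kf]
  rw [ENNReal.mul_iInf_of_ne hM0 hM]
  refine iInf_mono fun g => ?_
  rw [mul_add, ← mul_assoc]
  have h3 : ENNReal.ofReal s ≤ M * ENNReal.ofReal t := by
    calc ENNReal.ofReal s ≤ ENNReal.ofReal (B * t) := ENNReal.ofReal_le_ofReal h1
      _ = ENNReal.ofReal B * ENNReal.ofReal t := ENNReal.ofReal_mul' ht.le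
      _ ≤ _ := by gcongr
  refine add_le_add (le_mul_of_one_le_left zero_le h1') ?_
  gcongr

lemma QuasiBanach.neg (A : QuasiBanach E) (x : E) : A.N (-x) = A.N x := by
  have := A.smul (-1) x
  simpa using this

lemma Kf_neg (A₀ A₁ : QuasiBanach E) (t : ℝ) (f : E) :
    Kf A₀.N A₁.N t (-f) = Kf A₀.N A₁.N t f := by
  unfold Kf
  rw [← (Equiv.neg E).iInf_comp]
  refine iInf_congr fun g => ?_
  simp only [Equiv.neg_apply]
  rw [A₀.neg, show -f - -g = -(f - g) by abel, A₁.neg]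

lemma Kf_add (A₀ A₁ : QuasiBanach E) :
    ∃ Q : ℝ≥0, ∀ (t : ℝ) (f g : E), Kf A₀.N A₁.N t (f + g) ≤
      Q * (Kf A₀.N A₁.N t f + Kf A₀.N A₁.N t g) := by
  obtain ⟨C, hC1, hCt, hC⟩ := A₀.quasi
  obtain ⟨C', hC1', hCt', hC'⟩ := A₁.quasi
  have hne : C + C' ≠ ∞ := ENNReal.add_ne_top.2 ⟨hCt, hCt'⟩
  have hne0 : C + C' ≠ 0 := (zero_lt_one.trans_le (hC1.trans le_self_add)).ne'
  refine ⟨(C + C').toNNReal, fun t f g => ?_⟩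
  rw [ENNReal.coe_toNNReal hne]
  unfold Kf
  simp_rw [ENNReal.iInf_add, ENNReal.add_iInf, ENNReal.mul_iInf_of_ne hne0 hne]
  refine le_iInf₂ fun u v => ?_
  refine (iInf_le _ (u + v)).trans ?_
  calc A₀.N (u + v) + ENNReal.ofReal t * A₁.N (f + g - (u + v))
      ≤ C * (A₀.N u + A₀.N v) + ENNReal.ofReal t * (C' * (A₁.N (f - u) + A₁.N (g - v))) := by
        gcongr
        · exact hC u v
        · rw [show f + g - (u + v) = (f - u) + (g - v) by abel]; exact hC' _ _
    _ ≤ (C + C') * (A₀.N u + A₀.N v)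
          + ENNReal.ofReal t * ((C + C') * (A₁.N (f - u) + A₁.N (g - v))) := by
        gcongr
        · exact le_self_add
        · exact le_add_self
    _ = _ := by ring

lemma Kf_le_left (A₀ A₁ : QuasiBanach E) (t : ℝ) (f : E) : Kf A₀.N A₁.N t f ≤ A₀.N f :=
  (iInf_le _ f).trans (by rw [sub_self, A₁.zero]; simp)

lemma Kf_le_right (A₀ A₁ : QuasiBanach E) (t : ℝ) (f : E) :
    Kf A₀.N A₁.N t f ≤ ENNReal.ofReal t * A₁.N f :=
  (iInf_le _ 0).trans (by rw [sub_zero, A₀.zero]; simp)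

/-! ### Slowly varying functions -/

/-- Potter-type bounds. -/
def PV (b : ℝ → ℝ) : Prop :=
  (∀ t, 0 < t → 0 < b t) ∧ ∀ ε : ℝ, 0 < ε → ∃ C : ℝ, 0 < C ∧ ∀ s t : ℝ, 0 < s → s ≤ t →
    b t ≤ C * (t / s) ^ ε * b s ∧ b s ≤ C * (t / s) ^ ε * b t

lemma SlowlyVarying.pv {b : ℝ → ℝ} (hb : SlowlyVarying b) : PV b := by
  refine ⟨hb.2.1, fun ε hε => ?_⟩
  obtain ⟨⟨g, hg, C, hC, hgC⟩, ⟨g', hg', C', hC', hgC'⟩⟩ := hb.2.2 ε hε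
  refine ⟨C * C + C' * C', by positivity, fun s t hs hst => ?_⟩
  have ht := hs.trans_le hst
  have hbs := hb.2.1 s hs
  have hbt := hb.2.1 t ht
  have hsε : 0 < s ^ ε := Real.rpow_pos_of_pos hs ε
  have htε : 0 < t ^ ε := Real.rpow_pos_of_pos ht ε
  rw [Real.div_rpow ht.le hs.le]
  constructor
  · have h1 := (hgC' t ht).2
    have h2 := hg' hs ht hst
    have h3 := (hgC' s hs).1
    rw [inv_mul_le_iff₀ hC'] at h3
    simp only [Real.rpow_neg ht.le, Real.rpow_neg hs.le] at h1 h3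
    have h4 : (t ^ ε)⁻¹ * b t ≤ C' * (C' * ((s ^ ε)⁻¹ * b s)) :=
      h1.trans (mul_le_mul_of_nonneg_left (h2.trans h3) hC'.le)
    rw [inv_mul_le_iff₀ htε] at h4
    calc b t ≤ _ := h4
      _ = C' * C' * (t ^ ε / s ^ ε) * b s := by rw [div_eq_mul_inv]; ring
      _ ≤ _ := by gcongr; nlinarith
  · have h1 := (hgC s hs).2
    have h2 := hg hs ht hst
    have h3 := (hgC t ht).1
    rw [inv_mul_le_iff₀ hC] at h3
    have h4 : s ^ ε * b s ≤ C * (C * (t ^ ε * b t)) :=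
      h1.trans (mul_le_mul_of_nonneg_left (h2.trans h3) hC.le)
    rw [← le_inv_mul_iff₀ hsε] at h4
    calc b s ≤ _ := h4
      _ = C * C * (t ^ ε / s ^ ε) * b t := by rw [div_eq_mul_inv]; ring
      _ ≤ _ := by gcongr; nlinarith

lemma PV.div {b c : ℝ → ℝ} (hb : PV b) (hc : PV c) : PV (fun t => b t / c t) := by
  refine ⟨fun t ht => div_pos (hb.1 t ht) (hc.1 t ht), fun ε hε => ?_⟩
  obtain ⟨C, hC, h⟩ := hb.2 (ε / 2) (by positivity)
  obtain ⟨C', hC', h'⟩ := hc.2 (ε / 2) (by positivity)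
  refine ⟨C * C', by positivity, fun s t hs hst => ?_⟩
  have ht := hs.trans_le hst
  have hbs := hb.1 s hs
  have hbt := hb.1 t ht
  have hcs := hc.1 s hs
  have hct := hc.1 t ht
  have hts : 0 < t / s := div_pos ht hs
  have e : (t / s) ^ ε = (t / s) ^ (ε / 2) * (t / s) ^ (ε / 2) := by
    rw [← Real.rpow_add hts]; ring_nf
  have hp : 0 < (t / s) ^ (ε / 2) := Real.rpow_pos_of_pos hts _
  obtain ⟨h1, h2⟩ := h s t hs hst
  obtain ⟨h3, h4⟩ := h' s t hs hst
  rw [e]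
  set p := (t / s) ^ (ε / 2)
  constructor
  · rw [div_le_iff₀ hct]
    calc b t ≤ C * p * b s := h1
      _ = C * p * (b s / c s) * c s := by field_simp
      _ ≤ C * p * (b s / c s) * (C' * p * c t) := by gcongr
      _ = _ := by ring
  · rw [div_le_iff₀ hcs]
    calc b s ≤ C * p * b t := h2
      _ = C * p * (b t / c t) * c t := by field_simp
      _ ≤ C * p * (b t / c t) * (C' * p * c s) := by gcongr
      _ = _ := by ring

lemma PV.reg {b : ℝ → ℝ} (hb : PV b) : Reg b := by
  refine ⟨hb.1, fun B => ?_⟩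
  obtain ⟨C, hC, h⟩ := hb.2 1 one_pos
  refine ⟨C * max B 1, by positivity, fun s t hs ht h1 h2 => ?_⟩
  rcases le_total s t with hst | hst
  · refine (h s t hs hst).2.trans ?_
    have := hb.1 t ht
    rw [Real.rpow_one]
    gcongr
    rw [div_le_iff₀ hs]
    exact h2.trans (by gcongr; exact le_max_left _ _)
  · refine (h t s ht hst).1.trans ?_
    have := hb.1 t ht
    rw [Real.rpow_one]
    gcongr
    rw [div_le_iff₀ ht]
    exact h1.trans (by gcongr; exact le_max_left _ _)

lemma Grid.pow_le {D : ℝ} {x : ℤ → ℝ} (h : Grid D x) (k : ℤ) (n : ℕ) :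
    x (k + n) ≤ D ^ n * x k := by
  have hD := h.one_le
  induction n with
  | zero => simp
  | succ n ih =>
    have := h.le (k + n)
    push_cast
    rw [← add_assoc, pow_succ]
    calc _ ≤ _ := this
      _ ≤ D * (D ^ n * x k) := by gcongr
      _ = _ := by ring

lemma Grid.le_add {D : ℝ} {x : ℤ → ℝ} (h : Grid D x) (k : ℤ) (n : ℕ) : x k ≤ x (k + n) :=
  h.mono.monotone (by omega)

lemma pv_slow {b : ℝ → ℝ} (hb : PV b) {D : ℝ} {x : ℤ → ℝ} (hx : Grid D x) {τ : ℝ≥0}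
    (hτ0 : 0 < τ) (hτ : τ < 1) :
    ∃ C : ℝ≥0, ∀ (k : ℤ) (n : ℕ),
      (τ : ℝ≥0∞) ^ n * ENNReal.ofReal (b (x k)) ≤ C * ENNReal.ofReal (b (x (k + n))) := by
  have hD := hx.one_le
  have hlog : 0 < Real.log D := Real.log_pos (by linarith)
  have hτ0' : (0:ℝ) < τ := by exact_mod_cast hτ0
  have hτ' : (τ : ℝ) < 1 := by exact_mod_cast hτ
  have hlogτ : Real.log τ < 0 := Real.log_neg hτ0' hτ'
  set ε := - Real.log τ / Real.log D with hε
  have hε0 : 0 < ε := div_pos (by linarith) hlog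
  have hDε : D ^ ε = (τ : ℝ)⁻¹ := by
    rw [Real.rpow_def_of_pos (by linarith), hε, mul_div_cancel₀ _ hlog.ne', Real.exp_neg,
      Real.exp_log hτ0']
  obtain ⟨C, hC, h⟩ := hb.2 ε hε0
  refine ⟨C.toNNReal, fun k n => ?_⟩
  have h1 := (h _ _ (hx.pos k) (hx.le_add k n)).2
  have h2 : (x (k + n) / x k) ^ ε ≤ ((τ : ℝ)⁻¹) ^ n := by
    rw [← hDε, ← Real.rpow_natCast, ← Real.rpow_mul (by linarith), mul_comm ε, Real.rpow_mul (by linarith),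
      Real.rpow_natCast]
    refine Real.rpow_le_rpow (div_pos (hx.pos _) (hx.pos _)).le ?_ hε0.le
    rw [div_le_iff₀ (hx.pos k)]
    exact hx.pow_le k n
  have hbp := hb.1 _ (hx.pos (k + n))
  have h3 : (τ : ℝ) ^ n * b (x k) ≤ C * b (x (k + n)) := by
    calc (τ : ℝ) ^ n * b (x k) ≤ (τ : ℝ) ^ n * (C * (((τ : ℝ)⁻¹) ^ n) * b (x (k + n))) := by
          gcongr
          exact h1.trans (by gcongr)
      _ = _ := by
          have : (τ : ℝ) ^ n * ((τ : ℝ)⁻¹) ^ n = 1 := by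
            rw [← mul_pow, mul_inv_cancel₀ hτ0'.ne', one_pow]
          calc _ = C * ((τ : ℝ) ^ n * ((τ : ℝ)⁻¹) ^ n) * b (x (k + n)) := by ring
            _ = _ := by rw [this, mul_one]
  calc (τ : ℝ≥0∞) ^ n * ENNReal.ofReal (b (x k)) = ENNReal.ofReal ((τ : ℝ) ^ n * b (x k)) := by
        rw [ENNReal.ofReal_mul (by positivity), ENNReal.ofReal_pow (by positivity),
          ENNReal.ofReal_coe_nnreal]
    _ ≤ ENNReal.ofReal (C * b (x (k + n))) := ENNReal.ofReal_le_ofReal h3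
    _ = _ := by rw [ENNReal.ofReal_mul hC.le]; rfl

/-- The geometric ratio attached to an exponent. -/
lemma exists_tau {σ : ℝ} (hσ : 0 < σ) :
    ∃ τ : ℝ≥0, 0 < τ ∧ τ < 1 ∧ ((τ : ℝ) ^ 3) = (2 : ℝ) ^ (-(σ / 2)) := by
  have hc : ((Real.toNNReal ((2:ℝ) ^ (-(σ / 6))) : ℝ≥0) : ℝ) = (2:ℝ) ^ (-(σ / 6)) :=
    Real.coe_toNNReal _ (by positivity)
  refine ⟨Real.toNNReal ((2:ℝ) ^ (-(σ / 6))), Real.toNNReal_pos.2 (by positivity), ?_, ?_⟩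
  · rw [← NNReal.coe_lt_coe, hc, NNReal.coe_one]
    exact Real.rpow_lt_one_of_one_lt_of_neg one_lt_two (by linarith)
  · rw [hc, ← Real.rpow_natCast, ← Real.rpow_mul (by norm_num)]
    norm_num; ring_nf

lemma pv_core {b : ℝ → ℝ} (hb : PV b) {σ : ℝ} (hσ : 0 < σ) :
    ∃ τ : ℝ≥0, 0 < τ ∧ τ < 1 ∧ ∃ C : ℝ, 0 < C ∧ ∀ s t : ℝ, 0 < s → ∀ n : ℕ, 2 ^ n * s ≤ t →
      t ^ (-σ) * b t ≤ C * ((τ : ℝ) ^ 3) ^ n * (s ^ (-σ) * b s) ∧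
      s ^ σ * b s ≤ C * ((τ : ℝ) ^ 3) ^ n * (t ^ σ * b t) := by
  obtain ⟨τ, h0, h1, h2⟩ := exists_tau hσ
  obtain ⟨C, hC, h⟩ := hb.2 (σ / 2) (by positivity)
  refine ⟨τ, h0, h1, C, hC, fun s t hs n hst => ?_⟩
  have hst' : s ≤ t := by
    have : (1:ℝ) ≤ 2 ^ n := one_le_pow₀ (by norm_num)
    nlinarith
  have ht := hs.trans_le hst'
  have hbs := hb.1 s hs
  have hbt := hb.1 t ht
  have hts : 0 < t / s := div_pos ht hs
  have e : (t / s) ^ (-(σ / 2)) ≤ ((τ : ℝ) ^ 3) ^ n := by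
    rw [h2, ← Real.rpow_natCast, ← Real.rpow_mul (by norm_num), mul_comm,
      Real.rpow_mul (by norm_num), Real.rpow_natCast]
    refine Real.rpow_le_rpow_of_nonpos (by positivity) ?_ (by linarith)
    rw [le_div_iff₀ hs]; exact hst
  have e1 : (t / s) ^ (-(σ / 2)) = (t / s) ^ (σ / 2) * (t / s) ^ (-σ) := by
    rw [← Real.rpow_add hts]; ring_nf
  obtain ⟨h3, h4⟩ := h s t hs hst'
  constructor
  · calc t ^ (-σ) * b t ≤ t ^ (-σ) * (C * (t / s) ^ (σ / 2) * b s) := by gcongr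
      _ = C * ((t / s) ^ (σ / 2) * (t / s) ^ (-σ)) * (s ^ (-σ) * b s) := by
          have : t ^ (-σ) = (t / s) ^ (-σ) * s ^ (-σ) := by
            rw [← Real.mul_rpow hts.le hs.le, div_mul_cancel₀ _ hs.ne']
          rw [this]; ring
      _ ≤ _ := by rw [← e1]; gcongr
  · calc s ^ σ * b s ≤ s ^ σ * (C * (t / s) ^ (σ / 2) * b t) := by gcongr
      _ = C * ((t / s) ^ (σ / 2) * (t / s) ^ (-σ)) * (t ^ σ * b t) := by
          have : s ^ σ = (t / s) ^ (-σ) * t ^ σ := by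
            rw [Real.rpow_neg hts.le, Real.div_rpow ht.le hs.le]
            have := Real.rpow_pos_of_pos hs σ
            have := Real.rpow_pos_of_pos ht σ
            field_simp
          rw [this]; ring
      _ ≤ _ := by rw [← e1]; gcongr

lemma ofReal_geo {C : ℝ} (hC : 0 < C) (τ : ℝ≥0) (n : ℕ) {x y : ℝ}
    (h : x ≤ C * ((τ : ℝ) ^ 3) ^ n * y) :
    ENNReal.ofReal x ≤ (C.toNNReal : ℝ≥0∞) * ((τ : ℝ≥0∞) ^ 3) ^ n * ENNReal.ofReal y := by
  refine (ENNReal.ofReal_le_ofReal h).trans (le_of_eq ?_)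
  rw [ENNReal.ofReal_mul (by positivity), ENNReal.ofReal_mul hC.le,
    ENNReal.ofReal_pow (by positivity), ENNReal.ofReal_pow (by positivity),
    ENNReal.ofReal_coe_nnreal]
  rfl
/-! ### Discretization of the norms -/

lemma ofReal_split {u : ℝ} (hu : 0 < u) (θ p c : ℝ) :
    ENNReal.ofReal (u ^ (-θ - p) * c)
      = ENNReal.ofReal (u ^ (-p)) * ENNReal.ofReal (u ^ (-θ) * c) := by
  rw [← ENNReal.ofReal_mul (by positivity), ← mul_assoc, ← Real.rpow_add hu]
  congr 3
  ring

lemma normK_disc (N₀ N₁ : E → ℝ≥0∞) (θ : ℝ) {q : ℝ≥0∞} (hq : 0 < q) {b : ℝ → ℝ} (hb : Reg b)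
    {D : ℝ} {x : ℤ → ℝ} (hx : Grid D x) :
    ∃ C : ℝ≥0, ∀ f,
      normK N₀ N₁ θ q b f
        ≤ C * lq q (fun k => ENNReal.ofReal (x k ^ (-θ) * b (x k)) * Kf N₀ N₁ (x k) f) ∧
      lq q (fun k => ENNReal.ofReal (x k ^ (-θ) * b (x k)) * Kf N₀ N₁ (x k) f)
        ≤ C * normK N₀ N₁ θ q b f := by
  have hG : RegE (fun (f : E) u => ENNReal.ofReal (u ^ (-θ) * b u) * Kf N₀ N₁ u f) :=
    (((Reg.id.rpow (-θ)).mul hb).toE E).mul (Kf_regE N₀ N₁)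
  obtain ⟨C, hC⟩ := disc_full hG hq D
  refine ⟨C, fun f => ?_⟩
  have e : normK N₀ N₁ θ q b f = LqNorm q (Ioi 0) (fun u => ENNReal.ofReal (u ^ (-(q⁻¹.toReal))) *
      (ENNReal.ofReal (u ^ (-θ) * b u) * Kf N₀ N₁ u f)) := by
    refine LqNorm_congr q measurableSet_Ioi fun u hu => ?_
    rw [ofReal_split hu, mul_assoc]
  rw [e]
  exact hC x hx f

lemma normL_disc (N₀ N₁ : E → ℝ≥0∞) (σ : ℝ) {r q : ℝ≥0∞} (hr : 0 < r) (hq : 0 < q)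
    {b a : ℝ → ℝ} (hb : Reg b) (ha : Reg a) {D : ℝ} {x : ℤ → ℝ} (hx : Grid D x) :
    ∃ C : ℝ≥0, ∀ f,
      normL N₀ N₁ σ r q b a f
        ≤ C * lq r (fun m => ENNReal.ofReal (b (x m) / a (x m)) *
          lq q (lo m (fun j => ENNReal.ofReal (x j ^ (-σ) * a (x j)) * Kf N₀ N₁ (x j) f))) ∧
      lq r (fun m => ENNReal.ofReal (b (x m) / a (x m)) *
          lq q (lo m (fun j => ENNReal.ofReal (x j ^ (-σ) * a (x j)) * Kf N₀ N₁ (x j) f)))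
        ≤ C * normL N₀ N₁ σ r q b a f := by
  have hG : RegE (fun (f : E) u => ENNReal.ofReal (u ^ (-σ) * a u) * Kf N₀ N₁ u f) :=
    (((Reg.id.rpow (-σ)).mul ha).toE E).mul (Kf_regE N₀ N₁)
  have hH := ((hb.div ha).toE E).mul (regE_lo hG hq)
  obtain ⟨C, hC⟩ := disc_full hH hr D
  obtain ⟨C', hC'⟩ := disc_lo hG hq D
  refine ⟨C * C', fun f => ?_⟩
  have e : normL N₀ N₁ σ r q b a f = LqNorm r (Ioi 0) (fun t =>
      ENNReal.ofReal (t ^ (-(r⁻¹.toReal))) * (ENNReal.ofReal (b t / a t) *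
        LqNorm q (Ioo 0 t) (fun u => ENNReal.ofReal (u ^ (-(q⁻¹.toReal))) *
          (ENNReal.ofReal (u ^ (-σ) * a u) * Kf N₀ N₁ u f)))) := by
    refine LqNorm_congr r measurableSet_Ioi fun t ht => ?_
    have ht : 0 < t := ht
    rw [ENNReal.ofReal_mul (by positivity), mul_assoc]
    congr 2
    refine LqNorm_congr q measurableSet_Ioo fun u hu => ?_
    rw [ofReal_split hu.1, mul_assoc]
  rw [e]
  obtain ⟨h1, h2⟩ := hC x hx f
  constructor
  · refine h1.trans ?_
    rw [ENNReal.coe_mul, mul_assoc]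
    gcongr
    rw [← lq_const_mul hr]
    refine lq_mono _ fun m => ?_
    rw [mul_left_comm]
    gcongr
    exact (hC' x hx m f).1
  · calc _ ≤ lq r (fun m => C' * (ENNReal.ofReal (b (x m) / a (x m)) *
        LqNorm q (Ioo 0 (x m)) (fun u => ENNReal.ofReal (u ^ (-(q⁻¹.toReal))) *
          (ENNReal.ofReal (u ^ (-σ) * a u) * Kf N₀ N₁ u f)))) := by
          refine lq_mono _ fun m => ?_
          rw [mul_left_comm]
          gcongr
          exact (hC' x hx m f).2
      _ ≤ _ := by
          rw [lq_const_mul hr, ENNReal.coe_mul, mul_comm (C : ℝ≥0∞), mul_assoc]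
          gcongr

/-! ### The weights -/

/-- The kernel `min(1, x_j / x_k)`. -/
def mnk (x : ℤ → ℝ) (j k : ℤ) : ℝ≥0∞ := min 1 (ENNReal.ofReal (x j / x k))

lemma weight_bound {b : ℝ → ℝ} (hb : PV b) {σ : ℝ} (h0 : 0 < σ) (h1 : σ < 1) {D : ℝ} {x : ℤ → ℝ}
    (hx : Grid D x) :
    ∃ τ : ℝ≥0, 0 < τ ∧ τ < 1 ∧ ∃ C₀ : ℝ≥0, ∀ j k,
      ENNReal.ofReal (x j ^ (-σ) * b (x j)) * mnk x j k ≤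
        C₀ * ((τ : ℝ≥0∞) ^ 3) ^ (j - k).natAbs * ENNReal.ofReal (x k ^ (-σ) * b (x k)) := by
  obtain ⟨τ1, hτ10, hτ1, C1, hC1, H1⟩ := pv_core hb h0
  obtain ⟨τ2, hτ20, hτ2, C2, hC2, H2⟩ := pv_core hb (sub_pos.2 h1)
  refine ⟨max τ1 τ2, lt_max_of_lt_left hτ10, max_lt hτ1 hτ2, C1.toNNReal + C2.toNNReal,
    fun j k => ?_⟩
  have hm1 : (τ1 : ℝ≥0∞) ≤ ((max τ1 τ2 : ℝ≥0) : ℝ≥0∞) :=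
    ENNReal.coe_le_coe.2 (le_max_left _ _)
  have hm2 : (τ2 : ℝ≥0∞) ≤ ((max τ1 τ2 : ℝ≥0) : ℝ≥0∞) :=
    ENNReal.coe_le_coe.2 (le_max_right _ _)
  set n := (j - k).natAbs with hn
  have hxj := hx.pos j
  have hxk := hx.pos k
  rcases le_total k j with hkj | hkj
  · have hj : k + (n : ℤ) = j := by omega
    have hp := hx.pow k n
    rw [hj] at hp
    have := ofReal_geo hC1 τ1 n (H1 _ _ hxk n hp).1
    calc _ ≤ ENNReal.ofReal (x j ^ (-σ) * b (x j)) * 1 := by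
          gcongr; exact min_le_left _ _
      _ ≤ _ := by
          rw [mul_one]
          refine this.trans ?_
          gcongr
          exact le_self_add
  · have hj : j + (n : ℤ) = k := by omega
    have hp := hx.pow j n
    rw [hj] at hp
    have e := (H2 _ _ hxj n hp).2
    have e' : x j ^ (-σ) * b (x j) * (x j / x k) ≤
        C2 * ((τ2 : ℝ) ^ 3) ^ n * (x k ^ (-σ) * b (x k)) := by
      have r1 : ∀ y : ℝ, 0 < y → y ^ (1 - σ) = y ^ (-σ) * y := fun y hy => by
        rw [sub_eq_add_neg, add_comm, Real.rpow_add hy, Real.rpow_one]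
      rw [r1 _ hxj, r1 _ hxk] at e
      rw [← mul_div_assoc, div_le_iff₀ hxk]
      linarith
    have := ofReal_geo hC2 τ2 n e'
    have hbj := hb.1 _ hxj
    calc _ ≤ ENNReal.ofReal (x j ^ (-σ) * b (x j)) * ENNReal.ofReal (x j / x k) := by
          gcongr; exact min_le_right _ _
      _ ≤ _ := by
          rw [← ENNReal.ofReal_mul (by positivity)]
          refine this.trans ?_
          gcongr
          exact le_add_self

/-! ### The K-functional of the couple -/

lemma kappa_bounds (A₀ A₁ : QuasiBanach E) {D : ℝ} {x : ℤ → ℝ} (hx : Grid D x) :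
    ∃ Q : ℝ≥0, ∀ (f g : E) (k : ℤ) (e : ℝ≥0∞),
      e = A₀.N g + ENNReal.ofReal (x k) * A₁.N (f - g) →
      (∀ j, Kf A₀.N A₁.N (x j) g ≤
        Q * (lo k (fun j => Kf A₀.N A₁.N (x j) f) j + mnk x j k * e)) ∧
      (∀ j, Kf A₀.N A₁.N (x j) (f - g) ≤
        Q * (hi k (fun j => Kf A₀.N A₁.N (x j) f) j + mnk x j k * e)) := by
  obtain ⟨Q, hQ⟩ := Kf_add A₀ A₁
  have hQ1 : (1 : ℝ≥0∞) ≤ ((Q + 1 : ℝ≥0) : ℝ≥0∞) := by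
    rw [ENNReal.coe_add]; exact le_add_self
  have hQ2 : (Q : ℝ≥0∞) ≤ ((Q + 1 : ℝ≥0) : ℝ≥0∞) := by
    rw [ENNReal.coe_add]; exact le_self_add
  refine ⟨Q + 1, fun f g k e he => ?_⟩
  have h1 : ∀ j, Kf A₀.N A₁.N (x j) g ≤ 1 * e := fun j => by
    rw [one_mul]
    exact (Kf_le_left A₀ A₁ _ _).trans (he ▸ le_self_add)
  have h2 : ∀ j, Kf A₀.N A₁.N (x j) (f - g) ≤ ENNReal.ofReal (x j / x k) * e := fun j => by
    have hxj := hx.pos j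
    have hxk := hx.pos k
    refine (Kf_le_right A₀ A₁ _ _).trans ?_
    calc ENNReal.ofReal (x j) * A₁.N (f - g)
        = ENNReal.ofReal (x j / x k) * (ENNReal.ofReal (x k) * A₁.N (f - g)) := by
          rw [← mul_assoc, ← ENNReal.ofReal_mul (by positivity), div_mul_cancel₀ _ hxk.ne']
      _ ≤ _ := by gcongr; rw [he]; exact le_add_self
  have m1 : ∀ j, k ≤ j → mnk x j k = 1 := fun j hj => by
    refine min_eq_left ?_
    rw [ENNReal.one_le_ofReal, one_le_div (hx.pos k)]
    exact hx.mono.monotone hj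
  have m2 : ∀ j, j ≤ k → mnk x j k = ENNReal.ofReal (x j / x k) := fun j hj => by
    refine min_eq_right ?_
    rw [ENNReal.ofReal_le_one, div_le_one (hx.pos k)]
    exact hx.mono.monotone hj
  constructor
  · intro j
    by_cases hj : j ≤ k
    · have := hQ (x j) f (-(f - g))
      rw [Kf_neg, show f + -(f - g) = g by abel] at this
      refine this.trans ?_
      simp only [lo, if_pos hj, m2 j hj]
      gcongr
      exact h2 j
    · simp only [lo, if_neg hj, m1 j (by omega), zero_add]
      exact (h1 j).trans (le_mul_of_one_le_left zero_le hQ1)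
  · intro j
    by_cases hj : k ≤ j
    · have := hQ (x j) f (-g)
      rw [Kf_neg, ← sub_eq_add_neg] at this
      refine this.trans ?_
      simp only [hi, if_pos hj, m1 j hj]
      gcongr
      exact h1 j
    · simp only [hi, if_neg hj, m2 j (by omega), zero_add]
      exact (h2 j).trans (le_mul_of_one_le_left zero_le hQ1)

lemma Kf_upper (A₀ A₁ : QuasiBanach E) {D : ℝ} {x : ℤ → ℝ} (hx : Grid D x)
    {r₀ r₁ q₁ : ℝ≥0∞} (hr₀ : 0 < r₀) (hr₁ : 0 < r₁) (hq₁ : 0 < q₁)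
    {w0 w1 β d : ℤ → ℝ≥0∞} {R : ℤ → ℝ} {τ0 τ1 : ℝ≥0} (hτ0 : τ0 < 1) (hτ1 : τ1 < 1)
    {c0 c1 C₁ C₂ Ca Cb : ℝ≥0}
    (hw0 : ∀ j k, w0 j * mnk x j k ≤ c0 * ((τ0 : ℝ≥0∞) ^ 3) ^ (j - k).natAbs * w0 k)
    (hw1 : ∀ j k, w1 j * mnk x j k ≤ c1 * ((τ1 : ℝ≥0∞) ^ 3) ^ (j - k).natAbs * w1 k)
    (hβ : ∀ (k : ℤ) (n : ℕ), (τ1 : ℝ≥0∞) ^ n * β k ≤ C₁ * β (k + n))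
    (hd : ∀ k, lq r₁ (hi k β) ≤ C₂ * d k)
    (hR : ∀ k, w0 k = ENNReal.ofReal (R k) * w1 k * d k)
    (hw0t : ∀ k, w0 k ≠ ∞) {N₀ N₁ : E → ℝ≥0∞}
    (hN₀ : ∀ f, N₀ f ≤ Ca * lq r₀ (fun k => w0 k * Kf A₀.N A₁.N (x k) f))
    (hN₁ : ∀ f, N₁ f ≤ Cb * lq r₁ (fun m => β m *
      lq q₁ (lo m (fun j => w1 j * Kf A₀.N A₁.N (x j) f)))) :
    ∃ C : ℝ≥0, ∀ f k, Kf N₀ N₁ (R k) f ≤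
      C * (lq r₀ (lo k (fun j => w0 j * Kf A₀.N A₁.N (x j) f)) +
        ENNReal.ofReal (R k) * Jd r₁ q₁ β w1 k (fun j => Kf A₀.N A₁.N (x j) f)) := by
  obtain ⟨Q, hQ⟩ := kappa_bounds A₀ A₁ hx
  obtain ⟨D0, hD0⟩ := N0_bound hr₀ hτ0 hw0 Q
  obtain ⟨D1, hD1⟩ := N1_bound hr₁ hq₁ hτ1 hw1 hβ hd Q
  set M : ℝ≥0 := Ca * D0 + Cb * D1 with hM
  have key : ∀ f k g, Kf N₀ N₁ (R k) f ≤
      M * (lq r₀ (lo k (fun j => w0 j * Kf A₀.N A₁.N (x j) f)) +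
        ENNReal.ofReal (R k) * Jd r₁ q₁ β w1 k (fun j => Kf A₀.N A₁.N (x j) f)) +
      2 * M * w0 k * (A₀.N g + ENNReal.ofReal (x k) * A₁.N (f - g)) := by
    intro f k g
    obtain ⟨b1, b2⟩ := hQ f g k _ rfl
    set e := A₀.N g + ENNReal.ofReal (x k) * A₁.N (f - g)
    have n0 := (hN₀ g).trans (mul_le_mul_right (hD0 k e _ _ b1) _)
    have n1 := (hN₁ (f - g)).trans (mul_le_mul_right (hD1 k e _ _ b2) _)
    set I := lq r₀ (lo k (fun j => w0 j * Kf A₀.N A₁.N (x j) f))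
    set J := Jd r₁ q₁ β w1 k (fun j => Kf A₀.N A₁.N (x j) f)
    have hMa : (Ca : ℝ≥0∞) * D0 ≤ M := by rw [hM]; push_cast; exact le_self_add
    have hMb : (Cb : ℝ≥0∞) * D1 ≤ M := by rw [hM]; push_cast; exact le_add_self
    calc Kf N₀ N₁ (R k) f ≤ N₀ g + ENNReal.ofReal (R k) * N₁ (f - g) := iInf_le _ g
      _ ≤ Ca * (D0 * (I + w0 k * e))
          + ENNReal.ofReal (R k) * (Cb * (D1 * (J + w1 k * d k * e))) := by gcongr
      _ = (Ca * D0) * (I + w0 k * e) + (Cb * D1) * (ENNReal.ofReal (R k) * J + w0 k * e) := by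
          rw [hR k]; ring
      _ ≤ M * (I + w0 k * e) + M * (ENNReal.ofReal (R k) * J + w0 k * e) := by gcongr
      _ = _ := by ring
  refine ⟨3 * M, fun f k => ?_⟩
  have h2 : Kf N₀ N₁ (R k) f ≤
      M * (lq r₀ (lo k (fun j => w0 j * Kf A₀.N A₁.N (x j) f)) +
        ENNReal.ofReal (R k) * Jd r₁ q₁ β w1 k (fun j => Kf A₀.N A₁.N (x j) f)) +
      2 * M * w0 k * Kf A₀.N A₁.N (x k) f := by
    have ht : 2 * (M : ℝ≥0∞) * w0 k ≠ ∞ :=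
      ENNReal.mul_ne_top (ENNReal.mul_ne_top (by simp) ENNReal.coe_ne_top) (hw0t k)
    conv_rhs => rw [Kf]
    rw [ENNReal.mul_iInf' (fun h => absurd h ht) (fun _ => ⟨0⟩), ENNReal.add_iInf]
    exact le_iInf fun g => key f k g
  refine h2.trans ?_
  have h3 : w0 k * Kf A₀.N A₁.N (x k) f ≤
      lq r₀ (lo k (fun j => w0 j * Kf A₀.N A₁.N (x j) f)) := by
    have := le_lq hr₀ (lo k (fun j => w0 j * Kf A₀.N A₁.N (x j) f)) k
    simpa [lo] using this
  calc _ ≤ M * (lq r₀ (lo k (fun j => w0 j * Kf A₀.N A₁.N (x j) f)) +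
        ENNReal.ofReal (R k) * Jd r₁ q₁ β w1 k (fun j => Kf A₀.N A₁.N (x j) f)) +
      2 * M * (lq r₀ (lo k (fun j => w0 j * Kf A₀.N A₁.N (x j) f)) +
        ENNReal.ofReal (R k) * Jd r₁ q₁ β w1 k (fun j => Kf A₀.N A₁.N (x j) f)) := by
        rw [mul_assoc (2 * (M : ℝ≥0∞))]
        gcongr
        exact h3.trans le_self_add
    _ = _ := by push_cast; ring

lemma Kf_lower (A₀ A₁ : QuasiBanach E) {x : ℤ → ℝ}
    {r₀ r₁ q₁ : ℝ≥0∞} (hr₀ : 0 < r₀) (hr₁ : 0 < r₁) (hq₁ : 0 < q₁)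
    {w0 w1 β d : ℤ → ℝ≥0∞} {R : ℤ → ℝ} {C₂ Ca Cb : ℝ≥0}
    (hd : ∀ k, d k ≤ C₂ * lq r₁ (hi k β))
    (hR : ∀ k, w0 k = ENNReal.ofReal (R k) * w1 k * d k)
    (hρ : ∀ (k : ℤ) (n : ℕ),
      ENNReal.ofReal (R k) ≤ (2⁻¹ : ℝ≥0∞) ^ n * ENNReal.ofReal (R (k + n)))
    {N₀ N₁ : E → ℝ≥0∞}
    (hN₀ : ∀ f, lq r₀ (fun k => w0 k * Kf A₀.N A₁.N (x k) f) ≤ Ca * N₀ f)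
    (hN₁ : ∀ f, lq r₁ (fun m => β m *
      lq q₁ (lo m (fun j => w1 j * Kf A₀.N A₁.N (x j) f))) ≤ Cb * N₁ f) :
    ∃ C : ℝ≥0, ∀ f k, lq r₀ (lo k (fun j => w0 j * Kf A₀.N A₁.N (x j) f)) ≤
      C * Kf N₀ N₁ (R k) f := by
  obtain ⟨Q, hQ⟩ := Kf_add A₀ A₁
  obtain ⟨C1, h1⟩ := lq_add hr₀
  obtain ⟨C3, h3⟩ := I_low hr₁ hq₁ hr₀ hd hR hρ
  refine ⟨Q * C1 * (Ca + C3 * Cb), fun f k => ?_⟩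
  unfold Kf
  rw [ENNReal.mul_iInf' (fun h => absurd h ENNReal.coe_ne_top) (fun _ => ⟨0⟩)]
  refine le_iInf fun g => ?_
  change lq r₀ (lo k (fun j => w0 j * Kf A₀.N A₁.N (x j) f)) ≤ _
  calc lq r₀ (lo k (fun j => w0 j * Kf A₀.N A₁.N (x j) f))
      ≤ lq r₀ (fun j => Q * (lo k (fun j => w0 j * Kf A₀.N A₁.N (x j) g) j +
          lo k (fun j => w0 j * Kf A₀.N A₁.N (x j) (f - g)) j)) := by
        refine lq_mono _ fun j => ?_
        unfold lo
        split_ifs with hj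
        · have := hQ (x j) g (f - g)
          rw [add_sub_cancel] at this
          calc w0 j * Kf A₀.N A₁.N (x j) f
              ≤ w0 j * (Q * (Kf A₀.N A₁.N (x j) g + Kf A₀.N A₁.N (x j) (f - g))) :=
                mul_le_mul_right this _
            _ = _ := by ring
        · exact zero_le
    _ ≤ Q * (C1 * (lq r₀ (lo k (fun j => w0 j * Kf A₀.N A₁.N (x j) g)) +
          lq r₀ (lo k (fun j => w0 j * Kf A₀.N A₁.N (x j) (f - g))))) := by
        rw [lq_const_mul hr₀]
        gcongr
        exact h1 _ _
    _ ≤ Q * (C1 * (Ca * N₀ g + C3 * (ENNReal.ofReal (R k) * (Cb * N₁ (f - g))))) := by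
        gcongr
        · exact (lq_mono _ (lo_le k _)).trans (hN₀ g)
        · refine (h3 k _).trans ?_
          gcongr
          exact hN₁ _
    _ ≤ Q * (C1 * ((Ca + C3 * Cb) * N₀ g + (Ca + C3 * Cb) * (ENNReal.ofReal (R k) * N₁ (f - g)))) := by
        refine mul_le_mul_right (mul_le_mul_right (add_le_add ?_ ?_) _) _
        · gcongr; exact le_self_add
        · calc _ = C3 * Cb * (ENNReal.ofReal (R k) * N₁ (f - g)) := by ring
            _ ≤ _ := by gcongr; exact le_add_self
    _ = _ := by push_cast; ring
/-! ### Preparation of the final assembly -/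

lemma EquivNorms.of {X Y : E → ℝ≥0∞} (h1 : ∃ C : ℝ≥0, ∀ f, X f ≤ C * Y f)
    (h2 : ∃ C : ℝ≥0, ∀ f, Y f ≤ C * X f) : EquivNorms X Y := by
  obtain ⟨C, hC⟩ := h1
  obtain ⟨C', hC'⟩ := h2
  have e1 : (C : ℝ≥0∞) ≤ ((C + C' + 1 : ℝ≥0) : ℝ≥0∞) := by
    push_cast; rw [add_assoc]; exact le_self_add
  have e2 : (C' : ℝ≥0∞) ≤ ((C + C' + 1 : ℝ≥0) : ℝ≥0∞) := by
    push_cast; rw [add_comm (C : ℝ≥0∞), add_assoc]; exact le_self_add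
  have e0 : ((C + C' + 1 : ℝ≥0) : ℝ≥0∞) ≠ 0 := by
    simp
  refine ⟨((C + C' + 1 : ℝ≥0) : ℝ≥0∞), pos_iff_ne_zero.2 e0, ENNReal.coe_ne_top,
    fun f => ⟨?_, ?_⟩⟩
  · rw [mul_comm, ← div_eq_mul_inv]
    refine ENNReal.div_le_of_le_mul ?_
    rw [mul_comm]
    exact (hC' f).trans (by gcongr)
  · exact (hC f).trans (by gcongr)

lemma svWgt_hi (r : ℝ≥0∞) (β : ℝ → ℝ) {t : ℝ} (ht : 0 < t) :
    LqNorm r (Ioi t) (svWgt r β) = LqNorm r (Ioi t)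
      (fun u => ENNReal.ofReal (u ^ (-(r⁻¹.toReal))) * ENNReal.ofReal (β u)) := by
  refine LqNorm_congr r measurableSet_Ioi fun u hu => ?_
  have hu : 0 < u := ht.trans hu
  exact ENNReal.ofReal_mul (by positivity)

lemma d_disc {β : ℝ → ℝ} (hβ : PV β) {r : ℝ≥0∞} (hr : 0 < r) {D : ℝ} {x : ℤ → ℝ}
    (hx : Grid D x) :
    ∃ C : ℝ≥0, ∀ k,
      LqNorm r (Ioi (x k)) (svWgt r β) ≤ C * lq r (hi k (fun j => ENNReal.ofReal (β (x j)))) ∧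
      lq r (hi k (fun j => ENNReal.ofReal (β (x j)))) ≤ C * LqNorm r (Ioi (x k)) (svWgt r β) := by
  obtain ⟨C, hC⟩ := disc_hi (hβ.reg.toE Unit) hr D
  refine ⟨C, fun k => ?_⟩
  rw [svWgt_hi r β (hx.pos k)]
  exact hC x hx k ()

lemma d_regE {β : ℝ → ℝ} (hβ : PV β) {r : ℝ≥0∞} (hr : 0 < r) :
    RegE (fun (_ : Unit) t => LqNorm r (Ioi t) (svWgt r β)) := by
  intro B
  obtain ⟨C, hC⟩ := regE_hi (hβ.reg.toE Unit) hr B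
  refine ⟨C, fun a s t hs ht h1 h2 => ?_⟩
  simp only [svWgt_hi r β hs, svWgt_hi r β ht]
  exact hC a s t hs ht h1 h2

lemma d_ne_top {β : ℝ → ℝ} (hβ : PV β) {r : ℝ≥0∞} (hr : 0 < r)
    (hfin : LqNorm r (Ioi 1) (svWgt r β) ≠ ∞) {t : ℝ} (ht : 0 < t) :
    LqNorm r (Ioi t) (svWgt r β) ≠ ∞ := by
  obtain ⟨C, hC⟩ := d_regE hβ hr (t + t⁻¹)
  have hti : 0 < t⁻¹ := inv_pos.2 ht
  have e : t⁻¹ * t = 1 := inv_mul_cancel₀ ht.ne'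
  have := hC () t 1 ht one_pos (by linarith) (by nlinarith)
  exact ne_top_of_le_ne_top (ENNReal.mul_ne_top ENNReal.coe_ne_top hfin) this

lemma d_ne_zero {β : ℝ → ℝ} (hβ : PV β) {r : ℝ≥0∞} (hr : 0 < r) {t : ℝ} (ht : 0 < t) :
    LqNorm r (Ioi t) (svWgt r β) ≠ 0 := by
  have hx := grid_geo (B := 2) le_rfl ht
  obtain ⟨C, hC⟩ := d_disc hβ hr hx
  have h2 := (hC 0).2
  have h1 := le_lq hr (hi 0 (fun j : ℤ => ENNReal.ofReal (β (t * 2 ^ j)))) 0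
  simp only [hi, le_refl, if_true, zpow_zero, mul_one] at h1 h2
  intro h0
  rw [h0, mul_zero] at h2
  have h3 : ENNReal.ofReal (β t) ≤ 0 := h1.trans h2
  have h4 := ENNReal.ofReal_pos.2 (hβ.1 t ht)
  exact absurd h3 (not_le.2 h4)

lemma d_reg {β : ℝ → ℝ} (hβ : PV β) {r : ℝ≥0∞} (hr : 0 < r)
    (hfin : LqNorm r (Ioi 1) (svWgt r β) ≠ ∞) :
    Reg (fun t => (LqNorm r (Ioi t) (svWgt r β)).toReal) := by
  refine ⟨fun t ht => ENNReal.toReal_pos (d_ne_zero hβ hr ht) (d_ne_top hβ hr hfin ht),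
    fun B => ?_⟩
  obtain ⟨C, hC⟩ := d_regE hβ hr B
  refine ⟨C + 1, by positivity, fun s t hs ht h1 h2 => ?_⟩
  have h3 := ENNReal.toReal_mono
    (ENNReal.mul_ne_top ENNReal.coe_ne_top (d_ne_top hβ hr hfin ht)) (hC () s t hs ht h1 h2)
  rw [ENNReal.toReal_mul, ENNReal.coe_toReal] at h3
  refine h3.trans ?_
  gcongr
  linarith

lemma rho_growth {e dd : ℝ → ℝ} (he : PV e) (hd : ∀ t, 0 < t → 0 < dd t)
    (hanti : ∀ s t, 0 < s → s ≤ t → dd t ≤ dd s) {δ : ℝ} (hδ : 0 < δ) :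
    ∃ B : ℝ, 2 ≤ B ∧ ∀ t, 0 < t →
      2 * (t ^ δ * (e t / dd t)) ≤ (B * t) ^ δ * (e (B * t) / dd (B * t)) := by
  obtain ⟨C, hC, h⟩ := he.2 (δ / 2) (by positivity)
  set B := max 2 ((2 * C) ^ (2 / δ)) with hB
  have hB2 : 2 ≤ B := le_max_left _ _
  have hB0 : 0 < B := by linarith
  have hBC : 2 * C ≤ B ^ (δ / 2) := by
    calc 2 * C = ((2 * C) ^ (2 / δ)) ^ (δ / 2) := by
          rw [← Real.rpow_mul (by positivity), show 2 / δ * (δ / 2) = 1 by field_simp,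
            Real.rpow_one]
      _ ≤ _ := Real.rpow_le_rpow (by positivity) (le_max_right _ _) (by positivity)
  refine ⟨B, hB2, fun t ht => ?_⟩
  have hBt : 0 < B * t := by positivity
  have htB : t ≤ B * t := by nlinarith
  have h1 := (h t (B * t) ht htB).2
  rw [mul_div_assoc, div_self ht.ne', mul_one] at h1
  have h2 := hanti t (B * t) ht htB
  have h3 := hd _ hBt
  have h4 := hd _ ht
  have h5 := he.1 _ hBt
  have h6 : e t / dd t ≤ C * B ^ (δ / 2) * e (B * t) / dd (B * t) := by
    gcongr
  have h7 : B ^ δ = B ^ (δ / 2) * B ^ (δ / 2) := by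
    rw [← Real.rpow_add hB0]; ring_nf
  rw [Real.mul_rpow hB0.le ht.le, h7]
  have htδ : 0 < t ^ δ := Real.rpow_pos_of_pos ht _
  calc 2 * (t ^ δ * (e t / dd t)) ≤ 2 * (t ^ δ * (C * B ^ (δ / 2) * e (B * t) / dd (B * t))) := by
        gcongr
    _ = (2 * C) * (B ^ (δ / 2) * t ^ δ * (e (B * t) / dd (B * t))) := by ring
    _ ≤ B ^ (δ / 2) * (B ^ (δ / 2) * t ^ δ * (e (B * t) / dd (B * t))) := by gcongr
    _ = _ := by ring

lemma Grid.half {D : ℝ} {x : ℤ → ℝ} (h : Grid D x) (k : ℤ) (n : ℕ) :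
    ENNReal.ofReal (x k) ≤ (2⁻¹ : ℝ≥0∞) ^ n * ENNReal.ofReal (x (k + n)) := by
  have h1 := h.pow k n
  have h2 : x k ≤ (2⁻¹ : ℝ) ^ n * x (k + n) := by
    rw [inv_pow, le_inv_mul_iff₀ (by positivity)]
    exact h1
  refine (ENNReal.ofReal_le_ofReal h2).trans (le_of_eq ?_)
  rw [ENNReal.ofReal_mul (by positivity), ENNReal.ofReal_pow (by positivity),
    ENNReal.ofReal_inv_of_pos (by norm_num)]
  simp

lemma grid_dec {a : ℝ → ℝ} (ha : PV a) {σ : ℝ} (hσ : 0 < σ) {D : ℝ} {R : ℤ → ℝ} (hR : Grid D R) :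
    ∃ τ : ℝ≥0, 0 < τ ∧ τ < 1 ∧ ∃ C : ℝ≥0, ∀ (k : ℤ) (n : ℕ),
      ENNReal.ofReal (R (k + n) ^ (-σ) * a (R (k + n))) ≤
        C * ((τ : ℝ≥0∞) ^ 3) ^ n * ENNReal.ofReal (R k ^ (-σ) * a (R k)) := by
  obtain ⟨τ, h0, h1, C, hC, h⟩ := pv_core ha hσ
  exact ⟨τ, h0, h1, C.toNNReal, fun k n =>
    ofReal_geo hC τ n (h _ _ (hR.pos k) n (hR.pow k n)).1⟩

lemma grid_inc {a : ℝ → ℝ} (ha : PV a) {σ : ℝ} (hσ : 0 < σ) {D : ℝ} {R : ℤ → ℝ} (hR : Grid D R) :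
    ∃ τ : ℝ≥0, 0 < τ ∧ τ < 1 ∧ ∃ C : ℝ≥0, ∀ (k : ℤ) (n : ℕ),
      ENNReal.ofReal (R k ^ σ * a (R k)) ≤
        C * ((τ : ℝ≥0∞) ^ 3) ^ n * ENNReal.ofReal (R (k + n) ^ σ * a (R (k + n))) := by
  obtain ⟨τ, h0, h1, C, hC, h⟩ := pv_core ha hσ
  exact ⟨τ, h0, h1, C.toNNReal, fun k n =>
    ofReal_geo hC τ n (h _ _ (hR.pos k) n (hR.pow k n)).2⟩

theorem theorem18
    (A₀ A₁ : QuasiBanach E)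
    (hne : ∃ x : E, x ≠ 0 ∧ A₀.N x ≠ ∞ ∧ A₁.N x ≠ ∞)
    (θ₀ θ₁ : ℝ) (hθ₀ : 0 < θ₀) (hθ₀₁ : θ₀ < θ₁) (hθ₁ : θ₁ < 1)
    (q₁ r r₁ r₀ : ℝ≥0∞) (hq₁ : 0 < q₁) (hr : 0 < r) (hr₁ : 0 < r₁) (hr₀ : 0 < r₀)
    (a a₁ b₀ b₁ : ℝ → ℝ)
    (h_sv_a : SlowlyVarying a)
    (h_sv_a₁ : SlowlyVarying a₁)
    (h_sv_b₀ : SlowlyVarying b₀)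
    (h_sv_b₁ : SlowlyVarying b₁)
    (hfin : LqNorm r₁ (Ioi 1) (svWgt r₁ (fun s => b₁ s / a₁ s)) ≠ ∞)
    (c₁ ρ : ℝ → ℝ)
    (hc₁ : ∀ t, c₁ t = a₁ t * (LqNorm r₁ (Ioi t) (svWgt r₁ (fun s => b₁ s / a₁ s))).toReal)
    (hρ : ∀ t, ρ t = t ^ (θ₁ - θ₀) * (b₀ t / c₁ t)) :
    (∀ θ : ℝ, 0 < θ → θ < 1 →
      EquivNorms
        (normK (normK A₀.N A₁.N θ₀ r₀ b₀) (normL A₀.N A₁.N θ₁ r₁ q₁ b₁ a₁) θ r a)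
        (normK A₀.N A₁.N ((1 - θ) * θ₀ + θ * θ₁) r
          (fun t => b₀ t ^ (1 - θ) * c₁ t ^ θ * a (ρ t)))) ∧
    (LqNorm r (Ioi 1) (svWgt r (fun s => a s)) ≠ ∞ →
      EquivNorms
        (normK (normK A₀.N A₁.N θ₀ r₀ b₀) (normL A₀.N A₁.N θ₁ r₁ q₁ b₁ a₁) 0 r a)
        (normL A₀.N A₁.N θ₀ r r₀ (fun t => b₀ t * a (ρ t)) b₀)) := by
  set β : ℝ → ℝ := fun s => b₁ s / a₁ s with hβdef
  set dE : ℝ → ℝ≥0∞ := fun t => LqNorm r₁ (Ioi t) (svWgt r₁ β) with hdE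
  have ha := h_sv_a.pv
  have ha₁ := h_sv_a₁.pv
  have hb₀ := h_sv_b₀.pv
  have hb₁ := h_sv_b₁.pv
  have hβ : PV β := hb₁.div ha₁
  have hdreg : Reg (fun t => (dE t).toReal) := d_reg hβ hr₁ hfin
  have hcreg : Reg c₁ := (ha₁.reg.mul hdreg).congr fun t _ => hc₁ t
  have hρreg : Reg ρ :=
    ((Reg.id.rpow (θ₁ - θ₀)).mul (hb₀.reg.div hcreg)).congr fun t _ => hρ t
  have hρe : ∀ t, ρ t = t ^ (θ₁ - θ₀) * (b₀ t / a₁ t / (dE t).toReal) := fun t => by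
    rw [hρ, hc₁, div_div]
  -- the grid
  obtain ⟨B, hB2, hB⟩ := rho_growth (hb₀.div ha₁) hdreg.1
    (fun s t hs hst => ENNReal.toReal_mono (d_ne_top hβ hr₁ hfin hs)
      (LqNorm_mono_set _ (Ioi_subset_Ioi hst) _)) (sub_pos.2 hθ₀₁)
  have hx := grid_geo hB2 one_pos
  set x : ℤ → ℝ := fun k => 1 * B ^ k with hxdef
  have hB0 : 0 < B := by linarith
  have hxs : ∀ k, x (k + 1) = B * x k := fun k => by
    simp only [hxdef, zpow_add_one₀ hB0.ne']; ring
  obtain ⟨D', hD'0, hD'⟩ := hρreg.2 B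
  set R : ℤ → ℝ := fun k => ρ (x k) with hRdef
  have hRg : Grid D' R := by
    refine ⟨fun k => hρreg.1 _ (hx.pos k), fun k => ?_, fun k => ?_⟩
    · simp only [hRdef]
      rw [hxs, hρe, hρe]
      exact hB _ (hx.pos k)
    · have h1 := hx.pos k
      have h2 := hx.pos (k + 1)
      refine hD' _ _ h2 h1 (by rw [hxs]) ?_
      rw [hxs]
      have h3 : x k ≤ B * x k := by nlinarith
      exact h3.trans (mul_le_mul_of_nonneg_left h3 hB0.le)
  -- the sequences
  set w0 : ℤ → ℝ≥0∞ := fun j => ENNReal.ofReal (x j ^ (-θ₀) * b₀ (x j)) with hw0def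
  set w1 : ℤ → ℝ≥0∞ := fun j => ENNReal.ofReal (x j ^ (-θ₁) * a₁ (x j)) with hw1def
  set βs : ℤ → ℝ≥0∞ := fun j => ENNReal.ofReal (β (x j)) with hβs
  set d : ℤ → ℝ≥0∞ := fun j => dE (x j) with hddef
  set κ : E → ℤ → ℝ≥0∞ := fun f j => Kf A₀.N A₁.N (x j) f with hκ
  have hd0 : ∀ k, d k ≠ 0 := fun k => d_ne_zero hβ hr₁ (hx.pos k)
  have hdt : ∀ k, d k ≠ ∞ := fun k => d_ne_top hβ hr₁ hfin (hx.pos k)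
  have hRw : ∀ k, w0 k = ENNReal.ofReal (R k) * w1 k * d k := by
    intro k
    have hxk := hx.pos k
    have h1 := hdreg.1 _ hxk
    have h2 := ha₁.1 _ hxk
    have h3 := (hRg.pos k).le
    have h4 := Real.rpow_pos_of_pos hxk (-θ₁)
    simp only [hw0def, hw1def]
    rw [← ENNReal.ofReal_toReal (hdt k), ← ENNReal.ofReal_mul h3,
      ← ENNReal.ofReal_mul (by positivity)]
    congr 1
    simp only [hRdef, hddef]
    rw [hρe, show -θ₀ = (θ₁ - θ₀) + -θ₁ by ring, Real.rpow_add hxk]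
    field_simp
  obtain ⟨C₂, hC₂⟩ := d_disc hβ hr₁ hx
  have hd1 : ∀ k, lq r₁ (hi k βs) ≤ C₂ * d k := fun k => (hC₂ k).2
  have hd2 : ∀ k, d k ≤ C₂ * lq r₁ (hi k βs) := fun k => (hC₂ k).1
  obtain ⟨τ0, hτ00, hτ0, c0, hw0⟩ := weight_bound hb₀ hθ₀ (hθ₀₁.trans hθ₁) hx
  obtain ⟨τ1, hτ10, hτ1, c1, hw1⟩ := weight_bound ha₁ (hθ₀.trans hθ₀₁) hθ₁ hx
  obtain ⟨Cs, hCs⟩ := pv_slow hβ hx hτ10 hτ1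
  obtain ⟨Ca, hCa⟩ := normK_disc A₀.N A₁.N θ₀ hr₀ hb₀.reg hx
  obtain ⟨Cb, hCb⟩ := normL_disc A₀.N A₁.N θ₁ hr₁ hq₁ hb₁.reg ha₁.reg hx
  set N₀ := normK A₀.N A₁.N θ₀ r₀ b₀ with hN₀
  set N₁ := normL A₀.N A₁.N θ₁ r₁ q₁ b₁ a₁ with hN₁
  obtain ⟨CU, hCU⟩ := Kf_upper A₀ A₁ hx hr₀ hr₁ hq₁ hτ0 hτ1 hw0 hw1 hCs hd1 hRw
    (fun _ => ENNReal.ofReal_ne_top) (fun f => (hCa f).1) (fun f => (hCb f).1)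
  obtain ⟨CL, hCL⟩ := Kf_lower A₀ A₁ hr₀ hr₁ hq₁ hd2 hRw hRg.half
    (fun f => (hCa f).2) (fun f => (hCb f).2)
  have hI : ∀ f k, w0 k * κ f k ≤ lq r₀ (lo k (fun j => w0 j * κ f j)) := fun f k => by
    have := le_lq hr₀ (lo k (fun j => w0 j * κ f j)) k
    simpa [lo] using this
  -- the common two-sided estimate
  have main : ∀ θ : ℝ, θ < 1 → ∃ C : ℝ≥0, ∀ f,
      normK N₀ N₁ θ r a f ≤ C * lq r (fun k => ENNReal.ofReal (R k ^ (-θ) * a (R k)) *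
        lq r₀ (lo k (fun j => w0 j * κ f j))) ∧
      lq r (fun k => ENNReal.ofReal (R k ^ (-θ) * a (R k)) *
        lq r₀ (lo k (fun j => w0 j * κ f j))) ≤ C * normK N₀ N₁ θ r a f := by
    intro θ hθ
    obtain ⟨Cn, hCn⟩ := normK_disc N₀ N₁ θ hr ha.reg hRg
    obtain ⟨τ, hτa, hτb, cv, hv⟩ := grid_inc ha (sub_pos.2 hθ) hRg
    obtain ⟨Ct, hCt⟩ := pv_slow hβ hx hτa hτb
    obtain ⟨CJ, hCJ⟩ := J_bound (w := w1) hr hr₁ hq₁ hτb hv hCt hd1 hd2 hd0 hdt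
    obtain ⟨Cr, hCr⟩ := lq_add hr
    set v : ℤ → ℝ≥0∞ := fun k => ENNReal.ofReal (R k ^ (-θ) * a (R k)) with hvdef
    have hv' : ∀ k, ENNReal.ofReal (R k ^ (1 - θ) * a (R k)) = v k * ENNReal.ofReal (R k) := by
      intro k
      have hRk := hRg.pos k
      have := ha.1 _ hRk
      simp only [hvdef]
      rw [← ENNReal.ofReal_mul (by positivity), sub_eq_add_neg, Real.rpow_add hRk, Real.rpow_one]
      congr 1
      ring
    refine ⟨Cn * (CU * (Cr * (1 + CJ))) + CL * Cn, fun f => ⟨?_, ?_⟩⟩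
    · set I : ℤ → ℝ≥0∞ := fun k => lq r₀ (lo k (fun j => w0 j * κ f j)) with hIdef
      have s1 : lq r (fun k => v k * Kf N₀ N₁ (R k) f) ≤
          CU * (Cr * (lq r (fun k => v k * I k) + CJ * lq r (fun k => v k * I k))) := by
        calc lq r (fun k => v k * Kf N₀ N₁ (R k) f)
            ≤ lq r (fun k => CU * (v k * I k +
              ENNReal.ofReal (R k ^ (1 - θ) * a (R k)) * Jd r₁ q₁ βs w1 k (κ f))) := by
              refine lq_mono _ fun k => ?_
              calc v k * Kf N₀ N₁ (R k) f ≤ v k * (CU * (I k +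
                    ENNReal.ofReal (R k) * Jd r₁ q₁ βs w1 k (κ f))) :=
                    mul_le_mul_right (hCU f k) _
                _ = _ := by rw [hv']; ring
          _ ≤ CU * (Cr * (lq r (fun k => v k * I k) + lq r (fun k =>
              ENNReal.ofReal (R k ^ (1 - θ) * a (R k)) * Jd r₁ q₁ βs w1 k (κ f)))) := by
              rw [lq_const_mul hr]
              exact mul_le_mul_right (hCr _ _) _
          _ ≤ _ := by
              refine mul_le_mul_right (mul_le_mul_right (add_le_add le_rfl ?_) _) _
              refine (hCJ (κ f)).trans (mul_le_mul_right (lq_mono _ fun k => ?_) _)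
              calc _ = v k * (w0 k * κ f k) := by rw [hv', hRw]; ring
                _ ≤ _ := mul_le_mul_right (hI f k) _
      refine (hCn f).1.trans ((mul_le_mul_right s1 _).trans ?_)
      calc _ = (Cn * (CU * (Cr * (1 + CJ))) : ℝ≥0∞) * lq r (fun k => v k * I k) := by ring
        _ ≤ _ := by
            refine mul_le_mul_left ?_ _
            push_cast
            exact le_self_add
    · calc lq r (fun k => v k * lq r₀ (lo k (fun j => w0 j * κ f j)))
          ≤ lq r (fun k => CL * (v k * Kf N₀ N₁ (R k) f)) := by
            refine lq_mono _ fun k => ?_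
            rw [mul_left_comm]
            exact mul_le_mul_right (hCL f k) _
        _ ≤ CL * (Cn * normK N₀ N₁ θ r a f) := by
            rw [lq_const_mul hr]
            exact mul_le_mul_right (hCn f).2 _
        _ ≤ _ := by
            rw [← mul_assoc]
            refine mul_le_mul_left ?_ _
            push_cast
            exact le_add_self
  have haρ : Reg (fun t => a (ρ t)) := ha.reg.comp hρreg
  constructor
  · intro θ hθ0 hθ1
    obtain ⟨C, hC⟩ := main θ hθ1
    obtain ⟨τ, hτa, hτb, cv, hv⟩ := grid_dec ha hθ0 hRg
    obtain ⟨CI, hCI⟩ := I_bound hr hr₀ hτb hv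
    have hreg : Reg (fun t => b₀ t ^ (1 - θ) * c₁ t ^ θ * a (ρ t)) :=
      ((hb₀.reg.rpow (1 - θ)).mul (hcreg.rpow θ)).mul haρ
    obtain ⟨Cη, hCη⟩ := normK_disc A₀.N A₁.N ((1 - θ) * θ₀ + θ * θ₁) hr hreg hx
    have hwt : ∀ k, ENNReal.ofReal (x k ^ (-((1 - θ) * θ₀ + θ * θ₁)) *
        (b₀ (x k) ^ (1 - θ) * c₁ (x k) ^ θ * a (ρ (x k)))) =
        ENNReal.ofReal (R k ^ (-θ) * a (R k)) * w0 k := by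
      intro k
      have hxk := hx.pos k
      have hRk := hRg.pos k
      have hak := ha.1 _ hRk
      have hbk := hb₀.1 _ hxk
      have hck := hcreg.1 _ hxk
      simp only [hw0def]
      rw [← ENNReal.ofReal_mul (by positivity)]
      congr 1
      have e1 : R k ^ (-θ) = x k ^ (-(θ * (θ₁ - θ₀))) * (b₀ (x k) ^ (-θ) * c₁ (x k) ^ θ) := by
        simp only [hRdef]
        rw [hρ, Real.mul_rpow (by positivity) (by positivity), ← Real.rpow_mul hxk.le,
          Real.div_rpow hbk.le hck.le, Real.rpow_neg hck.le, div_inv_eq_mul]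
        congr 2
        ring
      rw [e1, show -((1 - θ) * θ₀ + θ * θ₁) = -(θ * (θ₁ - θ₀)) + -θ₀ by ring,
        Real.rpow_add hxk, show 1 - θ = -θ + 1 by ring, Real.rpow_add hbk, Real.rpow_one]
      simp only [hRdef]
      ring
    have hη : ∀ f, lq r (fun k => ENNReal.ofReal (x k ^ (-((1 - θ) * θ₀ + θ * θ₁)) *
        (b₀ (x k) ^ (1 - θ) * c₁ (x k) ^ θ * a (ρ (x k)))) * Kf A₀.N A₁.N (x k) f) =
        lq r (fun k => ENNReal.ofReal (R k ^ (-θ) * a (R k)) * (w0 k * κ f k)) := by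
      intro f
      congr 1
      funext k
      rw [hwt, mul_assoc]
    refine EquivNorms.of ⟨C * (CI * Cη), fun f => ?_⟩ ⟨Cη * C, fun f => ?_⟩
    · have h1 := (hCη f).2
      rw [hη] at h1
      calc _ ≤ _ := (hC f).1
        _ ≤ C * (CI * (Cη * _)) :=
            mul_le_mul_right ((hCI _).trans (mul_le_mul_right h1 _)) _
        _ = _ := by push_cast; ring
    · have h1 := (hCη f).1
      rw [hη] at h1
      calc _ ≤ _ := h1
        _ ≤ Cη * (C * _) := mul_le_mul_right
            ((lq_mono _ fun k => mul_le_mul_right (hI f k) _).trans (hC f).2) _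
        _ = _ := by push_cast; ring
  · intro _
    obtain ⟨C, hC⟩ := main 0 one_pos
    obtain ⟨CY, hCY⟩ := normL_disc A₀.N A₁.N θ₀ hr hr₀ (hb₀.reg.mul haρ) hb₀.reg hx
    have hY : ∀ f, lq r (fun m => ENNReal.ofReal (b₀ (x m) * a (ρ (x m)) / b₀ (x m)) *
        lq r₀ (lo m (fun j => ENNReal.ofReal (x j ^ (-θ₀) * b₀ (x j)) *
          Kf A₀.N A₁.N (x j) f))) =
        lq r (fun k => ENNReal.ofReal (R k ^ (-(0 : ℝ)) * a (R k)) *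
          lq r₀ (lo k (fun j => w0 j * κ f j))) := by
      intro f
      congr 1
      funext k
      have hbk := hb₀.1 _ (hx.pos k)
      rw [mul_div_cancel_left₀ _ hbk.ne', neg_zero, Real.rpow_zero, one_mul]
    refine EquivNorms.of ⟨C * CY, fun f => ?_⟩ ⟨CY * C, fun f => ?_⟩
    · have h1 := (hCY f).2
      rw [hY] at h1
      calc _ ≤ _ := (hC f).1
        _ ≤ C * (CY * _) := mul_le_mul_right h1 _
        _ = _ := by push_cast; ring
    · have h1 := (hCY f).1
      rw [hY] at h1
      calc _ ≤ _ := h1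
        _ ≤ CY * (C * _) := mul_le_mul_right (hC f).2 _
        _ = _ := by push_cast; ring

end
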